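/- Assume r = dim g(−1)₁̄ is odd and e = e_θ is minimal. The minimal finite W-superalgebra U(g₀,e) is generated by the even elements Θ′_{h_i} = h_i⊗1_χ (1 ≤ i ≤ k−1) and C′_θ = (2e + ½h² − (3/2)h + FE)⊗1_χ, and the odd elements Θ′_E = (E + ½Fh − ¾F)⊗1_χ and Θ′_F = F⊗1_χ, subject to the relations [Θ′_E,Θ′_E] = C′_θ + (1/8)⊗1_χ and [Θ′_F,Θ′_F] = −2⊗1_χ, all commutators between the other pairs of generators being zero. -/

import Mathlib

/-!
STATEMENT 14 (Proposition `fiosp` of the paper).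

`g₀ = h^e ⊕ s_θ` is the centralizer of `h^e` in `g`, with `s_θ ≅ osp(1|2)`
spanned by `e, h, f` and `F = √−2·v_{(r+1)/2}`, `E = [F, e]` (the case `r` odd,
`e = e_θ` minimal).  `U(g₀)` is encoded below as a ℂ-algebra `Ug0` containing
the images `ιh i, ιe, ιH, ιf, ιE, ιF` of the basis of `g₀`, subject to the
super-commutation relations of Lemma `osp12genecom` and the PBW theorem.

`m₀ = ℂf`, `(I₀)_χ` is the left ideal of `U(g₀)` generated by `f − 1`
(note `χ(f) = (e,f) = 1`), `(Q₀)_χ = U(g₀)/(I₀)_χ`, and the minimal finite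
`W`-superalgebra is `U(g₀,e) = (Q₀)_χ^{ad m₀}`, the set of cosets fixed by
`ad f`.

Claim: `U(g₀,e)` is generated by the (cosets of the) even elements
`Θ′_{h_i} = h_i⊗1` and `C′_θ = (2e + ½h² − (3/2)h + FE)⊗1` and the odd
elements `Θ′_E = (E + ½Fh − ¾F)⊗1` and `Θ′_F = F⊗1`, subject to the relations
`[Θ′_E,Θ′_E] = C′_θ + 1/8`, `[Θ′_F,Θ′_F] = −2`, all other commutators between
generators being zero; subject-to-relations is recorded by the PBW property:
the monomials `Θ′_F^{ι}·∏Θ′_{h_i}^{t_i}·C′_θ^{t_k}·Θ′_E^{ε}` form a ℂ-basis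
of `U(g₀,e)`.
-/
noncomputable section

open scoped BigOperators

/-- The ordered product of a finite family of elements of a ring. -/
def ringProd {A : Type} [Ring A] {n : ℕ} (F : Fin n → A) : A := (List.ofFn F).prod

/-!
The element `4FE - 2H - 1` of `U(osp(1|2))` anticommutes with `E` and `F`. Its square is therefore
central, and its product with `F` commutes with `f`: these two elements yield the Whittaker vectors
`C′_θ` and `Θ′_E` of `(Q₀)_χ`. To see that there are no further ones, let `W` be the span of the
proposed basis and `Pₙ` the falling factorials of `H/2`. The spaces `Pₙ W` add up to `(Q₀)_χ`, and
`f - 1` maps `Pₙ W` to `Pₙ₋₁ W` injectively, so it kills nothing outside `W`. For linear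
independence, `f - 1` acts locally nilpotently on `U(g₀)`, so an element of the left ideal
`U(g₀)(f - 1)` commuting with `f` lies in the right ideal `(f - 1)U(g₀)`, and the sums of its PBW
coefficients over the exponent of `f` all vanish. Comparing leading terms with respect to the
degree in `E` concludes.
-/

section CyclicModules

variable {K U V : Type*} [CommSemiring K] [Semiring U] [Algebra K U] [AddCommMonoid V]
  [Module K V] [Module U V] [IsScalarTower K U V]

theorem smul_mem_of_mem_adjoin {s : Set U} {N : Submodule K V}
    (hs : ∀ g ∈ s, ∀ x ∈ N, g • x ∈ N) {u : U} (hu : u ∈ Algebra.adjoin K s) {x : V}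
    (hx : x ∈ N) : u • x ∈ N := by
  induction hu using Algebra.adjoin_induction generalizing x with
  | mem g hg => exact hs g hg x hx
  | algebraMap c => rw [algebraMap_smul]; exact N.smul_mem c hx
  | add u v _ _ hu hv => rw [add_smul]; exact add_mem (hu hx) (hv hx)
  | mul u v _ _ hu hv => rw [mul_smul]; exact hu (hv hx)

theorem eq_top_of_cyclic_mem {s : Set U} (hs : Algebra.adjoin K s = ⊤) {v : V}
    (hv : ∀ x : V, ∃ u : U, u • v = x) {N : Submodule K V} (hN : ∀ g ∈ s, ∀ x ∈ N, g • x ∈ N)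
    (hvN : v ∈ N) : N = ⊤ := by
  refine eq_top_iff.2 fun x _ => ?_
  obtain ⟨u, rfl⟩ := hv x
  exact smul_mem_of_mem_adjoin hN (hs ▸ Algebra.mem_top) hvN

theorem smul_mem_span_of_forall {s : Set V} {g : U} {N : Submodule K V} (hg : ∀ x ∈ s, g • x ∈ N)
    {x : V} (hx : x ∈ Submodule.span K s) : g • x ∈ N :=
  (Submodule.span_le.2 hg : Submodule.span K s ≤ N.comap (Algebra.lsmul K K V g)) hx

end CyclicModules

section Lowering

variable {R M : Type*} [Ring R] [AddCommGroup M] [Module R M]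

theorem ker_le_of_lowering {T : Module.End R M} {S : ℕ → Submodule R M} (hS : ⨆ n, S n = ⊤)
    (h₀ : S 0 ≤ T.ker) (hT : ∀ n, S (n + 1) ≤ (S n).comap T)
    (hinj : ∀ n, Disjoint (S (n + 1)) T.ker) : T.ker ≤ S 0 := by
  have hkill : ∀ n, ∀ x ∈ S n, (T ^ (n + 1)) x = 0 := by
    intro n
    induction n with
    | zero => intro x hx; simpa using h₀ hx
    | succ n ih => intro x hx; rw [pow_succ, Module.End.mul_apply]; exact ih _ (hT n hx)
  have hpow : ∀ n, ∀ x ∈ S n, (T ^ n) x = 0 → x = 0 := by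
    intro n
    induction n with
    | zero => intro x _ h; simpa using h
    | succ n ih =>
      intro x hx h
      rw [pow_succ, Module.End.mul_apply] at h
      exact Submodule.disjoint_def.1 (hinj n) x hx (ih _ (hT n hx) h)
  have hkillSup : ∀ n, partialSups S n ≤ (T ^ (n + 1)).ker := fun n =>
    partialSups_le _ _ _ fun i hi x hx => by
      rw [LinearMap.mem_ker, ← Nat.sub_add_cancel (Nat.add_le_add_right hi 1), pow_add,
        Module.End.mul_apply, hkill i x hx, map_zero]
  have hmem : ∀ n, ∀ x ∈ partialSups S n, T x = 0 → x ∈ S 0 := by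
    intro n
    induction n with
    | zero => intro x hx _; simpa using hx
    | succ n ih =>
      intro x hx hTx
      rw [partialSups_add_one] at hx
      obtain ⟨y, hy, z, hz, rfl⟩ := Submodule.mem_sup.1 hx
      have hTz : (T ^ (n + 1)) z = 0 := by
        have hTyz : (T ^ (n + 1)) (y + z) = 0 := by
          rw [pow_succ, Module.End.mul_apply, hTx, map_zero]
        rwa [map_add, hkillSup n hy, zero_add] at hTyz
      obtain rfl := hpow (n + 1) z hz hTz
      rw [add_zero] at hTx ⊢
      exact ih y hy hTx
  intro x hx
  have hxS : x ∈ ⨆ n, partialSups S n := by rw [iSup_partialSups_eq, hS]; trivial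
  obtain ⟨n, hn⟩ := (Submodule.mem_iSup_of_chain (partialSups S) x).1 hxS
  exact hmem n x hn hx

end Lowering

section Triangular

variable {K V V' ι : Type*} [Field K] [AddCommGroup V] [Module K V] [AddCommGroup V'] [Module K V']

theorem linearIndependent_comp_of_triangular (π : V →ₗ[K] V') (w : ι → V) (l : ι → V →ₗ[K] K)
    (deg : ι → ℕ) (hdiag : ∀ j, l j (w j) ≠ 0)
    (hoff : ∀ i j, deg i ≤ deg j → i ≠ j → l j (w i) = 0)
    (hker : ∀ x ∈ Submodule.span K (Set.range w), π x = 0 → ∀ j, l j x = 0) :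
    LinearIndependent K (π ∘ w) := by
  classical
  refine linearIndependent_iff'.2 fun s c hsum => ?_
  by_contra! hc
  obtain ⟨i₀, hi₀, hc₀⟩ := hc
  obtain ⟨j, hj, hmax⟩ := (s.filter fun i => c i ≠ 0).exists_max_image deg
    ⟨i₀, Finset.mem_filter.2 ⟨hi₀, hc₀⟩⟩
  rw [Finset.mem_filter] at hj
  have hlj : l j (∑ i ∈ s, c i • w i) = c j * l j (w j) := by
    rw [map_sum, Finset.sum_eq_single_of_mem j hj.1, map_smul, smul_eq_mul]
    intro i hi hij
    by_cases hci : c i = 0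
    · rw [hci, zero_smul, map_zero]
    · rw [map_smul, hoff i j (hmax i (Finset.mem_filter.2 ⟨hi, hci⟩)) hij, smul_zero]
  have hmem : ∑ i ∈ s, c i • w i ∈ Submodule.span K (Set.range w) :=
    sum_mem fun i _ => Submodule.smul_mem _ _ (Submodule.subset_span ⟨i, rfl⟩)
  have hπ : π (∑ i ∈ s, c i • w i) = 0 := by
    rw [map_sum, ← hsum]
    exact Finset.sum_congr rfl fun i _ => map_smul π (c i) (w i)
  exact mul_ne_zero hj.2 (hdiag j) (hlj ▸ hker _ hmem hπ j)

end Triangular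

section BasisShift

variable {K V ι : Type*} [CommRing K] [AddCommGroup V] [Module K V]

/-- The functional on a module with basis indexed by `ℕ × ι` that adds up the coordinates in the
column of `i`. -/
def columnSum (b : Module.Basis (ℕ × ι) K V) (i : ι) : V →ₗ[K] K :=
  open Classical in b.constr K fun p => if p.2 = i then 1 else 0

theorem columnSum_apply [DecidableEq ι] (b : Module.Basis (ℕ × ι) K V) (i : ι) (p : ℕ × ι) :
    columnSum b i (b p) = if p.2 = i then 1 else 0 := by
  rw [columnSum, Module.Basis.constr_basis]
  congr

theorem columnSum_shift {b : Module.Basis (ℕ × ι) K V} {T : V →ₗ[K] V}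
    (hT : ∀ n i, T (b (n, i)) = b (n + 1, i)) (i : ι) (v : V) :
    columnSum b i (T v) = columnSum b i v := by
  classical
  suffices columnSum b i ∘ₗ T = columnSum b i from LinearMap.congr_fun this v
  exact b.ext fun p => by simp [hT, columnSum_apply]

theorem eq_zero_of_shift_eq_self {b : Module.Basis (ℕ × ι) K V} {T : V →ₗ[K] V}
    (hT : ∀ n i, T (b (n, i)) = b (n + 1, i)) {v : V} (hv : T v = v) : v = 0 := by
  classical
  have hzero : ∀ i u, b.coord (0, i) (T u) = 0 := by
    intro i u
    suffices b.coord (0, i) ∘ₗ T = 0 from LinearMap.congr_fun this u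
    exact b.ext fun p => by simp [hT]
  have hsucc : ∀ n i u, b.coord (n + 1, i) (T u) = b.coord (n, i) u := by
    intro n i u
    suffices b.coord (n + 1, i) ∘ₗ T = b.coord (n, i) from LinearMap.congr_fun this u
    exact b.ext fun p => by simp [hT, Finsupp.single_apply, Prod.ext_iff]
  refine b.forall_coord_eq_zero_iff.1 fun p => ?_
  obtain ⟨n, i⟩ := p
  induction n with
  | zero => rw [← hv, hzero]
  | succ n ih => rw [← hv, hsucc, ih]

end BasisShift

section LocallyNilpotent

attribute [local instance] LieRing.ofAssociativeRing

variable {K U : Type*} [CommRing K] [Ring U] [Algebra K U]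

theorem ad_mul (a x y : U) :
    LieAlgebra.ad K U a (x * y) = LieAlgebra.ad K U a x * y + x * LieAlgebra.ad K U a y := by
  simp only [LieAlgebra.ad_apply, Ring.lie_def]
  noncomm_ring

theorem ad_pow_mul_eq_zero {a : U} {m n : ℕ} {x y : U} (hx : (LieAlgebra.ad K U a ^ m) x = 0)
    (hy : (LieAlgebra.ad K U a ^ n) y = 0) : (LieAlgebra.ad K U a ^ (m + n)) (x * y) = 0 := by
  induction m generalizing n x y with
  | zero =>
    rw [pow_zero, Module.End.one_apply] at hx
    rw [hx, zero_mul, map_zero]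
  | succ m ihm =>
    induction n generalizing y with
    | zero =>
      rw [pow_zero, Module.End.one_apply] at hy
      rw [hy, mul_zero, map_zero]
    | succ n ihn =>
      have hx' : (LieAlgebra.ad K U a ^ m) (LieAlgebra.ad K U a x) = 0 := by
        rwa [← Module.End.mul_apply, ← pow_succ]
      have hy' : (LieAlgebra.ad K U a ^ n) (LieAlgebra.ad K U a y) = 0 := by
        rwa [← Module.End.mul_apply, ← pow_succ]
      rw [← add_assoc, pow_succ, Module.End.mul_apply, ad_mul, map_add, ihn hy',
        add_right_comm m 1 n, add_assoc m n 1, ihm hx' hy, add_zero]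

variable (K) in
/-- The subalgebra of the elements killed by some power of `ad a`. -/
def adNilpotentSubalgebra (a : U) : Subalgebra K U where
  carrier := {x | ∃ n, (LieAlgebra.ad K U a ^ n) x = 0}
  mul_mem' := fun ⟨m, hm⟩ ⟨n, hn⟩ => ⟨m + n, ad_pow_mul_eq_zero hm hn⟩
  add_mem' := fun ⟨m, hm⟩ ⟨n, hn⟩ => ⟨m + n, by
    rw [map_add, Module.End.pow_map_zero_of_le (Nat.le_add_right m n) hm,
      Module.End.pow_map_zero_of_le (Nat.le_add_left n m) hn, add_zero]⟩
  algebraMap_mem' c := ⟨1, by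
    rw [pow_one, LieAlgebra.ad_apply, Ring.lie_def, Algebra.commutes, sub_self]⟩

variable (K) in
theorem isRightRegular_of_isLeftRegular_of_adNilpotent {a : U} (ha : IsLeftRegular a)
    (hnil : adNilpotentSubalgebra K a = ⊤) : IsRightRegular a := by
  refine isRightRegular_iff_left_eq_zero_of_mul.2 fun v hv => ?_
  have had : ∀ n, (LieAlgebra.ad K U a ^ n) v = a ^ n * v := by
    intro n
    induction n with
    | zero => rw [pow_zero, pow_zero, one_mul, Module.End.one_apply]
    | succ n ih =>
      rw [pow_succ', Module.End.mul_apply, ih, LieAlgebra.ad_apply, Ring.lie_def, mul_assoc (a ^ n),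
        hv, mul_zero, sub_zero, pow_succ', mul_assoc]
  obtain ⟨n, hn⟩ : v ∈ adNilpotentSubalgebra K a := hnil ▸ Algebra.mem_top
  exact (isLeftRegular_iff_right_eq_zero_of_mul.1 (ha.pow n)) v (had n ▸ hn)

end LocallyNilpotent

theorem commute_of_commute_mul_right {U : Type*} [Semigroup U] {a u : U} (ha : IsRightRegular a)
    (h : Commute (u * a) a) : Commute u a :=
  ha (h.eq.trans (mul_assoc a u a).symm)

/-- A pair of elements `E`, `F` of a ring satisfying the relations of the odd root vectors of
`osp(1|2)`, that is `[H, E] = E` and `[H, F] = -F` for `H = EF + FE`, written out in terms of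
`E` and `F`. -/
structure Osp12Pair (U : Type*) [Ring U] where
  E : U
  F : U
  F_mul_E_sq : F * (E * E) = E * E * F + E
  E_mul_F_sq : E * (F * F) = F * F * E - F

namespace Osp12Pair

section Ring

variable {U : Type*} [Ring U] (S : Osp12Pair U)

/-- The Cartan element of `osp(1|2)`. -/
def H : U := S.E * S.F + S.F * S.E

/-- The positive even root vector of `osp(1|2)`. -/
def e : U := S.E * S.E

/-- The negative even root vector of `osp(1|2)`. -/
def f : U := -(S.F * S.F)

/-- Twice the `sCasimir` element `2FE - H - 1/2` of `osp(1|2)`, which anticommutes with the odd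
part, so that its square is central; the factor avoids denominators. -/
def sCasimir : U := 4 * (S.F * S.E) - 2 * S.H - 1

theorem E_mul_F : S.E * S.F = S.H - S.F * S.E := (add_sub_cancel_right _ _).symm

theorem E_mul_f : S.E * S.f = S.f * S.E + S.F := by
  linear_combination (norm := (simp only [f]; noncomm_ring)) -S.E_mul_F_sq

theorem e_mul_f : S.e * S.f = S.f * S.e + S.H := by
  rw [e, mul_assoc, E_mul_f, mul_add, ← mul_assoc, E_mul_f, add_mul, mul_assoc, H, add_right_comm,
    add_assoc]

theorem commute_F_f : Commute S.F S.f := ((Commute.refl S.F).mul_right (Commute.refl S.F)).neg_right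

theorem semiconjBy_E_H : SemiconjBy S.E S.H (S.H - 1) := by
  rw [SemiconjBy]
  linear_combination (norm := (simp only [H]; noncomm_ring)) -S.F_mul_E_sq

theorem semiconjBy_F_H : SemiconjBy S.F S.H (S.H + 1) := by
  rw [SemiconjBy]
  linear_combination (norm := (simp only [H]; noncomm_ring)) -S.E_mul_F_sq

theorem semiconjBy_f_H : SemiconjBy S.f S.H (S.H + 2) := by
  have h := (S.semiconjBy_F_H.add_right (SemiconjBy.one_right _)).mul_left S.semiconjBy_F_H
  rw [add_assoc, one_add_one_eq_two] at h
  exact h.neg_left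

theorem semiconjBy_E_sCasimir : SemiconjBy S.E S.sCasimir (-S.sCasimir) := by
  rw [SemiconjBy]
  linear_combination (norm := (simp only [sCasimir, H]; noncomm_ring)) 2 * S.F_mul_E_sq

theorem semiconjBy_F_sCasimir : SemiconjBy S.F S.sCasimir (-S.sCasimir) := by
  rw [SemiconjBy]
  linear_combination (norm := (simp only [sCasimir, H]; noncomm_ring)) -2 * S.E_mul_F_sq

theorem sCasimir_mul_F : S.sCasimir * S.F = -(S.F * S.sCasimir) := by
  rw [S.semiconjBy_F_sCasimir.eq, neg_mul, neg_neg]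

theorem commute_E_sCasimir_sq : Commute S.E (S.sCasimir * S.sCasimir) := by
  have h := S.semiconjBy_E_sCasimir.mul_right S.semiconjBy_E_sCasimir
  rwa [neg_mul_neg] at h

theorem commute_F_sCasimir_sq : Commute S.F (S.sCasimir * S.sCasimir) := by
  have h := S.semiconjBy_F_sCasimir.mul_right S.semiconjBy_F_sCasimir
  rwa [neg_mul_neg] at h

theorem commute_sCasimir_f : Commute S.sCasimir S.f := by
  have h := S.semiconjBy_F_sCasimir.neg_right.mul_left S.semiconjBy_F_sCasimir
  rw [neg_neg] at h
  exact Commute.symm (SemiconjBy.neg_left h)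

theorem sCasimir_mul_self : S.sCasimir * S.sCasimir =
    16 * (S.f * S.e) + 4 * (S.H * S.H) + 4 * S.H + 8 * (S.F * S.E) + 1 := by
  linear_combination (norm := (simp only [sCasimir, f, e]; noncomm_ring))
    16 * S.F * S.E_mul_F * S.E - 8 * S.F * S.semiconjBy_E_H.eq + 8 * S.semiconjBy_F_H.eq * S.E

end Ring

section Algebra

variable (K : Type*) {U : Type*} [Field K] [Ring U] [Algebra K U] (S : Osp12Pair U)

/-- The quadratic Casimir element of `osp(1|2)`, normalised by its action as `C′_θ` on Whittaker
vectors. -/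
def casimir : U := (1 / 8 : K) • (S.sCasimir * S.sCasimir - 1)

/-- The element commuting with `f` that acts as `Θ′_E` on Whittaker vectors. -/
def thetaE : U := (-1 / 4 : K) • (S.F * S.sCasimir)

theorem commute_E_casimir : Commute S.E (S.casimir K) :=
  (S.commute_E_sCasimir_sq.sub_right (Commute.one_right _)).smul_right _

theorem commute_F_casimir : Commute S.F (S.casimir K) :=
  (S.commute_F_sCasimir_sq.sub_right (Commute.one_right _)).smul_right _

theorem commute_thetaE_f : Commute (S.thetaE K) S.f :=
  (S.commute_F_f.mul_left S.commute_sCasimir_f).smul_left _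

theorem thetaE_mul_F : S.thetaE K * S.F = -(S.F * S.thetaE K) := by
  rw [thetaE, smul_mul_assoc, mul_assoc, sCasimir_mul_F, mul_neg, smul_neg, mul_smul_comm]

variable [CharZero K]

theorem casimir_eq : S.casimir K =
    (2 : K) • (S.f * S.e) + (1 / 2 : K) • (S.H * S.H) + (1 / 2 : K) • S.H + S.F * S.E := by
  rw [casimir, sCasimir_mul_self]
  simp only [← Nat.cast_ofNat (R := U), ← nsmul_eq_mul]
  module

theorem thetaE_eq : S.thetaE K = S.f * S.E + (1 / 2 : K) • (S.F * S.H) + (1 / 4 : K) • S.F := by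
  have h : S.F * S.sCasimir = -((4 : ℕ) • (S.f * S.E) + (2 : ℕ) • (S.F * S.H) + S.F) := by
    simp only [sCasimir, f]
    noncomm_ring
  rw [thetaE, h]
  module

theorem thetaE_mul_self : S.thetaE K * S.thetaE K =
    S.f * ((1 / 2 : K) • S.casimir K + (1 / 16 : K) • 1) := by
  have h : S.F * S.sCasimir * (S.F * S.sCasimir) = S.f * (S.sCasimir * S.sCasimir) := by
    rw [mul_assoc, ← mul_assoc S.sCasimir, sCasimir_mul_F, f]
    noncomm_ring
  rw [thetaE, smul_mul_smul_comm, h, casimir, mul_add, mul_smul_comm, mul_smul_comm,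
    mul_smul_comm, mul_sub]
  module

theorem casimir_sub_e_mul : S.casimir K - (2 : K) • S.e * (S.f - 1) =
    (2 : K) • S.e + (1 / 2 : K) • (S.H * S.H) - (3 / 2 : K) • S.H + S.F * S.E := by
  rw [casimir_eq, smul_mul_assoc, mul_sub, e_mul_f, mul_one]
  module

theorem thetaE_sub_E_mul : S.thetaE K - S.E * (S.f - 1) =
    S.E + (1 / 2 : K) • (S.F * S.H) - (3 / 4 : K) • S.F := by
  rw [thetaE_eq, mul_sub, E_mul_f, mul_one]
  module

end Algebra

section Centralizer

variable {U : Type*} [Ring U] {S : Osp12Pair U} {u : U}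

theorem commute_H (hE : Commute u S.E) (hF : Commute u S.F) : Commute u S.H :=
  (hE.mul_right hF).add_right (hF.mul_right hE)

theorem commute_f (hF : Commute u S.F) : Commute u S.f :=
  (hF.mul_right hF).neg_right

theorem commute_sCasimir (hE : Commute u S.E) (hF : Commute u S.F) : Commute u S.sCasimir :=
  (((Commute.ofNat_right u 4).mul_right (hF.mul_right hE)).sub_right
    ((Commute.ofNat_right u 2).mul_right (commute_H hE hF))).sub_right (Commute.one_right u)

variable {K : Type*} [Field K] [Algebra K U]

theorem commute_casimir (hE : Commute u S.E) (hF : Commute u S.F) : Commute u (S.casimir K) :=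
  have h := commute_sCasimir hE hF
  ((h.mul_right h).sub_right (Commute.one_right u)).smul_right _

theorem commute_thetaE (hE : Commute u S.E) (hF : Commute u S.F) : Commute u (S.thetaE K) :=
  (hF.mul_right (commute_sCasimir hE hF)).smul_right _

theorem commute_casimir_thetaE : Commute (S.casimir K) (S.thetaE K) :=
  commute_thetaE (S.commute_E_casimir K).symm (S.commute_F_casimir K).symm

theorem commute_casimir_f : Commute (S.casimir K) S.f := commute_f (S.commute_F_casimir K).symm

end Centralizer

section Whittaker

open Polynomial

variable (K : Type*) {U : Type*} [Field K] [Ring U] [Algebra K U] (S : Osp12Pair U)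

/-- The falling factorial `s (s - 1) ⋯ (s - n + 1)` of `s = H/2`. -/
def fallingH (n : ℕ) : U := aeval ((1 / 2 : K) • S.H) (descPochhammer K n)

theorem fallingH_zero : S.fallingH K 0 = 1 := by rw [fallingH, descPochhammer_zero, map_one]

theorem fallingH_succ (n : ℕ) :
    S.fallingH K (n + 1) = ((1 / 2 : K) • S.H - n) * S.fallingH K n := by
  rw [fallingH, descPochhammer_succ_right, mul_comm, map_mul, map_sub, aeval_X, map_natCast,
    fallingH]

variable (V : Type*) [AddCommGroup V] [Module K V] [Module U V] [IsScalarTower K U V]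

/-- The left ideal generated by `f - 1`, whose quotient is the universal module generated by a
Whittaker vector. -/
def whittakerIdeal : Submodule U U := Submodule.span U {S.f - 1}

/-- The space of Whittaker vectors `f x = x` of a representation. -/
def whittaker : Submodule K V := (Algebra.lsmul K K V (S.f - 1)).ker

variable {K V}

theorem mem_whittaker {x : V} : x ∈ S.whittaker K V ↔ S.f • x = x := by
  simp only [whittaker, LinearMap.mem_ker, Algebra.lsmul_coe, sub_smul, one_smul, sub_eq_zero]

theorem smul_mem_whittaker {u : U} (hu : Commute u S.f) {x : V} (hx : x ∈ S.whittaker K V) :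
    u • x ∈ S.whittaker K V := by
  rw [mem_whittaker] at hx ⊢
  rw [← mul_smul, ← hu.eq, mul_smul, hx]

theorem sub_mul_f_sub_one_smul (u w : U) {x : V} (hx : x ∈ S.whittaker K V) :
    (u - w * (S.f - 1)) • x = u • x := by
  have h : (S.f - 1) • x = 0 := hx
  rw [sub_smul, mul_smul, h, smul_zero, sub_zero]

variable (K) in
/-- The image of a space `W` of vectors under the `n`-th falling factorial of `H/2`; on Whittaker
vectors, `f - 1` lowers `n` by one. -/
def layer (W : Submodule K V) (n : ℕ) : Submodule K V :=
  W.map (Algebra.lsmul K K V (S.fallingH K n))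

theorem layer_zero (W : Submodule K V) : S.layer K W 0 = W := by
  rw [layer, fallingH_zero, map_one]
  exact Submodule.map_id W

theorem fallingH_smul_mem_iSup_layer {W : Submodule K V} (n : ℕ) {x : V} (hx : x ∈ W) :
    S.fallingH K n • x ∈ ⨆ n, S.layer K W n :=
  Submodule.mem_iSup_of_mem n ⟨x, hx, rfl⟩

theorem smul_mem_of_mem_iSup_layer {W N : Submodule K V} {g : U}
    (hg : ∀ n, ∀ x ∈ W, g • S.fallingH K n • x ∈ N) {y : V} (hy : y ∈ ⨆ n, S.layer K W n) :
    g • y ∈ N :=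
  (iSup_le fun n => Submodule.map_le_iff_le_comap.2 (hg n) :
    ⨆ n, S.layer K W n ≤ N.comap (Algebra.lsmul K K V g)) hy

theorem half_H_sub_nat_smul_mem_iSup_layer {W : Submodule K V} (m : ℕ) {y : V}
    (hy : y ∈ ⨆ n, S.layer K W n) :
    ((1 / 2 : K) • S.H - (m : U)) • y ∈ ⨆ n, S.layer K W n := by
  refine S.smul_mem_of_mem_iSup_layer (fun n x hx => ?_) hy
  have h : ((1 / 2 : K) • S.H - (m : U)) • S.fallingH K n • x =
      S.fallingH K (n + 1) • x + ((n : K) - m) • S.fallingH K n • x := by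
    rw [fallingH_succ, mul_smul, sub_smul, sub_smul, sub_smul, Nat.cast_smul_eq_nsmul,
      Nat.cast_smul_eq_nsmul, Nat.cast_smul_eq_nsmul, Nat.cast_smul_eq_nsmul,
      sub_add_sub_cancel]
  rw [h]
  exact add_mem (S.fallingH_smul_mem_iSup_layer (n + 1) hx)
    (Submodule.smul_mem _ _ (S.fallingH_smul_mem_iSup_layer n hx))

variable (K) [CharZero K]

theorem f_mul_half_H : S.f * (1 / 2 : K) • S.H = ((1 / 2 : K) • S.H + 1) * S.f := by
  have h : S.H + 2 = S.H + (2 : K) • 1 := by rw [ofNat_smul_eq_nsmul, nsmul_one, Nat.cast_ofNat]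
  rw [mul_smul_comm, S.semiconjBy_f_H.eq, h, add_mul, add_mul, smul_mul_assoc, smul_mul_assoc]
  module

theorem f_mul_fallingH_succ (n : ℕ) : S.f * S.fallingH K (n + 1) =
    (S.fallingH K (n + 1) + (n + 1 : U) * S.fallingH K n) * S.f := by
  induction n with
  | zero =>
    simp only [fallingH_succ, fallingH_zero, Nat.cast_zero, sub_zero, mul_one, zero_add,
      f_mul_half_H]
  | succ n ih =>
    have hshift : S.f * ((1 / 2 : K) • S.H - (n + 1 : ℕ)) = ((1 / 2 : K) • S.H - n) * S.f := by
      rw [mul_sub, f_mul_half_H, ← Nat.cast_commute, ← sub_mul, Nat.cast_succ,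
        add_sub_add_right_eq_sub]
    have hcast : ((1 / 2 : K) • S.H - n) * (n + 1 : U) =
        (n + 1 : U) * ((1 / 2 : K) • S.H - n) := by
      rw [← Nat.cast_succ, Nat.cast_comm]
    rw [S.fallingH_succ K (n + 1), ← mul_assoc, hshift, mul_assoc, ih, ← mul_assoc, mul_add,
      ← mul_assoc, hcast, mul_assoc, ← fallingH_succ, Nat.cast_succ]
    noncomm_ring

variable {K}

theorem f_sub_one_smul_fallingH_smul (n : ℕ) {x : V} (hx : x ∈ S.whittaker K V) :
    (S.f - 1) • S.fallingH K (n + 1) • x = (n + 1 : K) • S.fallingH K n • x := by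
  rw [mem_whittaker] at hx
  rw [sub_smul, one_smul, ← mul_smul, f_mul_fallingH_succ, mul_smul, hx, add_smul,
    add_sub_cancel_left, mul_smul, ← Nat.cast_succ, ← Nat.cast_succ, Nat.cast_smul_eq_nsmul,
    Nat.cast_smul_eq_nsmul]

theorem whittaker_eq_of_iSup_layer_eq_top {W : Submodule K V} (hW : W ≤ S.whittaker K V)
    (htop : ⨆ n, S.layer K W n = ⊤) : S.whittaker K V = W := by
  refine le_antisymm ?_ hW
  conv_rhs => rw [← S.layer_zero W]
  refine ker_le_of_lowering htop ((S.layer_zero W).trans_le hW) ?_ fun n => ?_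
  · rintro n _ ⟨x, hx, rfl⟩
    exact ⟨(n + 1 : K) • x, W.smul_mem _ hx, by
      rw [map_smul]; exact (S.f_sub_one_smul_fallingH_smul n (hW hx)).symm⟩
  · rw [Submodule.disjoint_def]
    rintro _ ⟨x, hx, rfl⟩ hker
    have hlow : (n + 1 : K) • S.fallingH K n • x = 0 :=
      (S.f_sub_one_smul_fallingH_smul n (hW hx)).symm.trans hker
    have hx0 : S.fallingH K n • x = 0 := (smul_eq_zero.1 hlow).resolve_left n.cast_add_one_ne_zero
    simp only [Algebra.lsmul_coe, fallingH_succ, mul_smul, hx0, smul_zero]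

theorem H_smul_mem_iSup_layer {W : Submodule K V} {y : V} (hy : y ∈ ⨆ n, S.layer K W n) :
    S.H • y ∈ ⨆ n, S.layer K W n := by
  have h := Submodule.smul_mem _ (2 : K) (S.half_H_sub_nat_smul_mem_iSup_layer 0 hy)
  rwa [Nat.cast_zero, sub_zero, ← smul_assoc, smul_smul, mul_one_div_cancel two_ne_zero,
    one_smul] at h

theorem smul_mem_iSup_layer {W : Submodule K V} {g : U} {c : K}
    (hg : SemiconjBy g S.H (S.H + c • 1)) (hgW : ∀ x ∈ W, g • x ∈ ⨆ n, S.layer K W n) :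
    ∀ y ∈ ⨆ n, S.layer K W n, g • y ∈ ⨆ n, S.layer K W n := by
  intro y
  refine S.smul_mem_of_mem_iSup_layer fun n x hx => ?_
  induction n with
  | zero => rw [fallingH_zero, one_smul]; exact hgW x hx
  | succ n ih =>
    have h : g * S.fallingH K (n + 1) =
        ((1 / 2 : K) • S.H - n) * (g * S.fallingH K n) + (c / 2) • (g * S.fallingH K n) := by
      have hs : g * ((1 / 2 : K) • S.H - n) =
          ((1 / 2 : K) • S.H - n) * g + (c / 2) • g := by
        rw [mul_sub, mul_smul_comm, hg.eq, ← Nat.cast_commute, sub_mul, add_mul, smul_mul_assoc,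
          smul_mul_assoc, one_mul]
        module
      rw [fallingH_succ, ← mul_assoc, hs, add_mul, smul_mul_assoc, mul_assoc]
    rw [← mul_smul] at ih ⊢
    rw [h, add_smul, mul_smul, smul_assoc]
    exact add_mem (S.half_H_sub_nat_smul_mem_iSup_layer n ih) (Submodule.smul_mem _ _ ih)

theorem whittaker_eq_of_stable {A : Set U} (hA : Algebra.adjoin K ({S.E, S.F} ∪ A) = ⊤)
    (hAE : ∀ a ∈ A, Commute a S.E) (hAF : ∀ a ∈ A, Commute a S.F) {v : V}
    (hv : ∀ x : V, ∃ u : U, u • v = x) {W : Submodule K V} (hW : W ≤ S.whittaker K V)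
    (hvW : v ∈ W) (hWF : ∀ x ∈ W, S.F • x ∈ W) (hWE : ∀ x ∈ W, S.thetaE K • x ∈ W)
    (hWA : ∀ a ∈ A, ∀ x ∈ W, a • x ∈ W) : S.whittaker K V = W := by
  have hle : W ≤ ⨆ n, S.layer K W n := (S.layer_zero W).symm.trans_le (le_iSup _ 0)
  refine S.whittaker_eq_of_iSup_layer_eq_top hW (eq_top_of_cyclic_mem hA hv ?_ (hle hvW))
  have hE : ∀ x ∈ W, S.E • x ∈ ⨆ n, S.layer K W n := by
    intro x hx
    have h : S.E • x = S.thetaE K • x - (1 / 2 : K) • S.H • S.F • x + (1 / 4 : K) • S.F • x := by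
      have hrep := S.sub_mul_f_sub_one_smul (S.thetaE K) S.E (hW hx)
      have hE : S.E = S.E + (1 / 2 : K) • (S.F * S.H) - (3 / 4 : K) • S.F -
          (1 / 2 : K) • (S.H * S.F) + (1 / 4 : K) • S.F := by
        rw [S.semiconjBy_F_H.eq, add_mul, one_mul]
        module
      rw [S.thetaE_sub_E_mul K] at hrep
      conv_lhs => rw [hE]
      rw [add_smul, sub_smul, hrep, smul_assoc, smul_assoc, mul_smul]
    rw [h]
    exact add_mem (sub_mem (hle (hWE x hx))
      (Submodule.smul_mem _ _ (S.H_smul_mem_iSup_layer (hle (hWF x hx)))))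
      (Submodule.smul_mem _ _ (hle (hWF x hx)))
  rintro g ((rfl | rfl) | hg)
  · refine S.smul_mem_iSup_layer (c := -1) ?_ hE
    rw [neg_one_smul, ← sub_eq_add_neg]
    exact S.semiconjBy_E_H
  · refine S.smul_mem_iSup_layer (c := 1) ?_ fun x hx => hle (hWF x hx)
    rw [one_smul]
    exact S.semiconjBy_F_H
  · refine S.smul_mem_iSup_layer (c := 0) ?_ fun x hx => hle (hWA g hg x hx)
    rw [zero_smul, add_zero]
    exact commute_H (hAE g hg) (hAF g hg)

end Whittaker

section Generators

variable (K : Type*) {U τ : Type*} [Field K] [Ring U] [Algebra K U] (S : Osp12Pair U)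

/-- The ordered monomials in the generators of the algebra of Whittaker invariants, with `g` a
spanning family of an algebra centralizing `E` and `F`. -/
def invariantMonomial (g : τ → U) (z : Fin 2 × τ × ℕ × Fin 2) : U :=
  S.F ^ (z.1 : ℕ) * g z.2.1 * S.casimir K ^ z.2.2.1 * S.thetaE K ^ (z.2.2.2 : ℕ)

variable {K S} {g : τ → U}

theorem commute_invariantMonomial_f (hgF : ∀ t, Commute (g t) S.F) (z : Fin 2 × τ × ℕ × Fin 2) :
    Commute (S.invariantMonomial K g z) S.f :=
  (((S.commute_F_f.pow_left _).mul_left (commute_f (hgF _))).mul_left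
    (commute_casimir_f.pow_left _)).mul_left ((S.commute_thetaE_f K).pow_left _)

variable {V : Type*} [AddCommGroup V] [Module K V] [Module U V] [IsScalarTower K U V]

variable (K) in
/-- The span of the vectors obtained by applying the invariant monomials to a vector. -/
def invariantSpan (S : Osp12Pair U) (g : τ → U) (v : V) : Submodule K V :=
  Submodule.span K (Set.range fun z => S.invariantMonomial K g z • v)

variable {v : V}

theorem invariantSpan_le_whittaker (hgF : ∀ t, Commute (g t) S.F) (hv : v ∈ S.whittaker K V) :
    S.invariantSpan K g v ≤ S.whittaker K V :=
  Submodule.span_le.2 <| Set.range_subset_iff.2 fun z =>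
    S.smul_mem_whittaker (commute_invariantMonomial_f hgF z) hv

theorem smul_mem_invariantSpan {a : U} (ha : a ∈ Submodule.span K (Set.range g)) (i : Fin 2)
    (c : ℕ) (j : Fin 2) :
    (S.F ^ (i : ℕ) * a * S.casimir K ^ c * S.thetaE K ^ (j : ℕ)) • v ∈ S.invariantSpan K g v := by
  induction ha using Submodule.span_induction with
  | mem _ h =>
    obtain ⟨t, rfl⟩ := h
    exact Submodule.subset_span ⟨(i, t, c, j), rfl⟩
  | zero => simp only [mul_zero, zero_mul, zero_smul, zero_mem]
  | add a b _ _ ha hb => simpa only [mul_add, add_mul, add_smul] using add_mem ha hb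
  | smul r a _ ha =>
    simpa only [mul_smul_comm, smul_mul_assoc, smul_assoc] using Submodule.smul_mem _ r ha

theorem F_smul_mem_invariantSpan (hgF : ∀ t, Commute (g t) S.F) (hv : v ∈ S.whittaker K V) :
    ∀ x ∈ S.invariantSpan K g v, S.F • x ∈ S.invariantSpan K g v := by
  intro x
  refine smul_mem_span_of_forall (Set.forall_mem_range.2 ?_)
  rintro ⟨i, t, c, j⟩
  have hmem (i : Fin 2) : S.invariantMonomial K g (i, t, c, j) • v ∈ S.invariantSpan K g v :=
    Submodule.subset_span ⟨_, rfl⟩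
  fin_cases i
  · have h : S.F * S.invariantMonomial K g (0, t, c, j) = S.invariantMonomial K g (1, t, c, j) := by
      simp [invariantMonomial, mul_assoc]
    rw [Fin.zero_eta, ← mul_smul, h]
    exact hmem 1
  · have h : S.F * S.invariantMonomial K g (1, t, c, j) =
        -(S.f * S.invariantMonomial K g (0, t, c, j)) := by
      simp [invariantMonomial, f, mul_assoc]
    have hf := S.mem_whittaker.1 (invariantSpan_le_whittaker hgF hv (hmem 0))
    rw [Fin.mk_one, ← mul_smul, h, neg_smul, mul_smul, hf]
    exact neg_mem (hmem 0)

theorem thetaE_mul_invariantMonomial (hgE : ∀ t, Commute (g t) S.E) (hgF : ∀ t, Commute (g t) S.F)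
    (i : Fin 2) (t : τ) (c : ℕ) (j : Fin 2) :
    S.thetaE K * S.invariantMonomial K g (i, t, c, j) =
      (-1 : U) ^ (i : ℕ) *
        (S.F ^ (i : ℕ) * g t * S.casimir K ^ c * S.thetaE K ^ (j : ℕ) * S.thetaE K) := by
  have hF : S.thetaE K * S.F ^ (i : ℕ) = (-1) ^ (i : ℕ) * S.F ^ (i : ℕ) * S.thetaE K := by
    fin_cases i <;> simp [thetaE_mul_F]
  rw [invariantMonomial, ← mul_assoc, ← mul_assoc, ← mul_assoc, hF, mul_assoc _ (S.thetaE K),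
    ← (commute_thetaE (hgE t) (hgF t)).eq, mul_assoc, mul_assoc _ (S.thetaE K ^ _), ← pow_succ,
    pow_succ', ← mul_assoc, ← mul_assoc, mul_assoc _ (S.thetaE K),
    ← (commute_casimir_thetaE.pow_left c).eq]
  simp only [mul_assoc]

theorem thetaE_smul_mem_invariantSpan [CharZero K] (hgE : ∀ t, Commute (g t) S.E)
    (hgF : ∀ t, Commute (g t) S.F) (hv : v ∈ S.whittaker K V) :
    ∀ x ∈ S.invariantSpan K g v, S.thetaE K • x ∈ S.invariantSpan K g v := by
  intro x
  refine smul_mem_span_of_forall (Set.forall_mem_range.2 ?_)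
  rintro ⟨i, t, c, j⟩
  have hmem (c : ℕ) (j : Fin 2) := smul_mem_invariantSpan (S := S) (K := K) (v := v)
    (Submodule.subset_span ⟨t, rfl⟩ : g t ∈ Submodule.span K (Set.range g)) i c j
  suffices h : (S.F ^ (i : ℕ) * g t * S.casimir K ^ c * S.thetaE K ^ (j : ℕ) * S.thetaE K) • v ∈
      S.invariantSpan K g v by
    rw [← mul_smul, thetaE_mul_invariantMonomial hgE hgF]
    rcases neg_one_pow_eq_or U (i : ℕ) with hi | hi
    · rwa [hi, one_mul]
    · rw [hi, neg_one_mul, neg_smul]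
      exact neg_mem h
  fin_cases j
  · simpa using hmem c 1
  · have h := add_mem (Submodule.smul_mem _ (1 / 2 : K) (hmem (c + 1) 0))
      (Submodule.smul_mem _ (1 / 16 : K) (hmem c 0))
    have hf : Commute S.f ((1 / 2 : K) • S.casimir K + (1 / 16 : K) • 1) :=
      (commute_casimir_f.symm.smul_right _).add_right ((Commute.one_right _).smul_right _)
    rw [mul_assoc, Fin.mk_one, Fin.val_one, pow_one, thetaE_mul_self, hf.eq, ← mul_assoc, mul_smul,
      S.mem_whittaker.1 hv]
    simpa [mul_add, add_smul, pow_succ, mul_assoc] using h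

theorem smul_mem_invariantSpan_of_mem {A : Subalgebra K U}
    (hg : Submodule.span K (Set.range g) = Subalgebra.toSubmodule A)
    (hAF : ∀ a ∈ A, Commute a S.F) :
    ∀ a ∈ A, ∀ x ∈ S.invariantSpan K g v, a • x ∈ S.invariantSpan K g v := by
  intro a ha x
  refine smul_mem_span_of_forall (Set.forall_mem_range.2 ?_)
  rintro ⟨i, t, c, j⟩
  have hgt : g t ∈ A := hg.le (Submodule.subset_span ⟨t, rfl⟩)
  have h : a * S.invariantMonomial K g (i, t, c, j) =
      S.F ^ (i : ℕ) * (a * g t) * S.casimir K ^ c * S.thetaE K ^ (j : ℕ) := by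
    simp only [invariantMonomial, ← mul_assoc, ((hAF a ha).pow_right (i : ℕ)).eq]
  rw [← mul_smul, h]
  exact smul_mem_invariantSpan (hg.ge (A.mul_mem ha hgt)) i c j

theorem whittaker_eq_invariantSpan [CharZero K] {A : Subalgebra K U}
    (hA : Algebra.adjoin K ({S.E, S.F} ∪ (A : Set U)) = ⊤) (hAE : ∀ a ∈ A, Commute a S.E)
    (hAF : ∀ a ∈ A, Commute a S.F)
    (hg : Submodule.span K (Set.range g) = Subalgebra.toSubmodule A)
    (hcyc : ∀ x : V, ∃ u : U, u • v = x) (hv : v ∈ S.whittaker K V) :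
    S.whittaker K V = S.invariantSpan K g v := by
  have hgA (t : τ) : g t ∈ A := hg.le (Submodule.subset_span ⟨t, rfl⟩)
  have hgF (t : τ) := hAF _ (hgA t)
  refine S.whittaker_eq_of_stable hA hAE hAF hcyc (invariantSpan_le_whittaker hgF hv) ?_
    (F_smul_mem_invariantSpan hgF hv)
    (thetaE_smul_mem_invariantSpan (fun t => hAE _ (hgA t)) hgF hv)
    (smul_mem_invariantSpan_of_mem hg hAF)
  simpa using smul_mem_invariantSpan (S := S) (v := v) (hg.ge A.one_mem) 0 0 0

end Generators

end Osp12Pair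

theorem semiconjBy_pow_add_nsmul {R : Type*} [Semiring R] {x y c : R} (h : SemiconjBy x y (y + c))
    (hc : Commute x c) (n : ℕ) : SemiconjBy (x ^ n) y (y + n • c) := by
  induction n with
  | zero => rw [pow_zero, zero_nsmul, add_zero]; exact SemiconjBy.one_left y
  | succ n ih =>
    have hn : SemiconjBy x (y + n • c) (y + (n + 1) • c) := by
      rw [succ_nsmul', ← add_assoc]
      exact h.add_right (hc.smul_right n)
    rw [pow_succ']
    exact hn.mul_left ih

namespace Osp12Pair

section PBW

variable (K : Type*) {U τ : Type*} [Field K] [Ring U] [Algebra K U] (S : Osp12Pair U)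

/-- The ordered monomials of the Poincaré–Birkhoff–Witt theorem for the enveloping algebra of the
sum of `osp(1|2)` and a commuting even part, `g` being a basis of the algebra generated by the
latter. -/
def pbwMonomial (g : τ → U) (z : ℕ × Fin 2 × τ × ℕ × ℕ × Fin 2) : U :=
  S.f ^ z.1 * S.F ^ (z.2.1 : ℕ) * g z.2.2.1 * S.H ^ z.2.2.2.1 * S.e ^ z.2.2.2.2.1 *
    S.E ^ (z.2.2.2.2.2 : ℕ)

/-- The degree filtration by powers of `E` to the right: the span of the monomials of degree less
than `D` in `E`, where `e` has degree two. -/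
def degreeELT (g : τ → U) (D : ℕ) : Submodule K U :=
  Submodule.span K (S.pbwMonomial g '' {z | 2 * z.2.2.2.2.1 + z.2.2.2.2.2 < D})

variable {K S} {g : τ → U} {D : ℕ}

theorem pbwMonomial_eq_mul_E_pow (g : τ → U) (z : ℕ × Fin 2 × τ × ℕ × ℕ × Fin 2) :
    S.pbwMonomial g z = S.f ^ z.1 * S.F ^ (z.2.1 : ℕ) * g z.2.2.1 * S.H ^ z.2.2.2.1 *
      S.E ^ (2 * z.2.2.2.2.1 + z.2.2.2.2.2) := by
  rw [pbwMonomial, mul_assoc, e, ← pow_two, ← pow_mul, ← pow_add]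

theorem degreeELT_mono : Monotone (S.degreeELT K g) := fun _ _ h =>
  Submodule.span_mono (Set.image_mono fun _ hz => lt_of_lt_of_le hz h)

theorem mul_mem_degreeELT {a : U} (ha : a ∈ Submodule.span K (Set.range g)) (n : ℕ) (i : Fin 2)
    (m : ℕ) {c : ℕ} {j : Fin 2} (hD : 2 * c + j < D) :
    S.f ^ n * S.F ^ (i : ℕ) * a * S.H ^ m * S.e ^ c * S.E ^ (j : ℕ) ∈ S.degreeELT K g D := by
  induction ha using Submodule.span_induction with
  | mem _ h =>
    obtain ⟨t, rfl⟩ := h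
    exact Submodule.subset_span ⟨(n, i, t, m, c, j), hD, rfl⟩
  | zero => simp only [mul_zero, zero_mul, zero_mem]
  | add a b _ _ ha hb => simpa only [mul_add, add_mul] using add_mem ha hb
  | smul r a _ ha => simpa only [mul_smul_comm, smul_mul_assoc] using Submodule.smul_mem _ r ha

theorem F_mul_mem_degreeELT {y : U} (hy : y ∈ S.degreeELT K g D) : S.F * y ∈ S.degreeELT K g D := by
  rw [← smul_eq_mul]
  refine smul_mem_span_of_forall (Set.forall_mem_image.2 ?_) hy
  rintro ⟨n, i, t, m, c, j⟩ hD
  have hmem (n : ℕ) (i : Fin 2) : S.pbwMonomial g (n, i, t, m, c, j) ∈ S.degreeELT K g D :=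
    Submodule.subset_span ⟨(n, i, t, m, c, j), hD, rfl⟩
  have hF : S.F * S.f ^ n = S.f ^ n * S.F := (S.commute_F_f.pow_right n).eq
  rw [smul_eq_mul]
  fin_cases i
  · have h : S.F * S.pbwMonomial g (n, 0, t, m, c, j) = S.pbwMonomial g (n, 1, t, m, c, j) := by
      simp [pbwMonomial, ← mul_assoc, hF]
    exact h ▸ hmem n 1
  · have h : S.F * S.pbwMonomial g (n, 1, t, m, c, j) =
        -S.pbwMonomial g (n + 1, 0, t, m, c, j) := by
      have hFF : S.f ^ n * S.F * S.F = -S.f ^ (n + 1) := by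
        rw [mul_assoc, pow_succ, f, mul_neg, neg_neg]
      simp [pbwMonomial, ← mul_assoc, hF, hFF]
    exact h ▸ neg_mem (hmem (n + 1) 0)

theorem H_mul_f_pow_mul_F_pow (n i : ℕ) :
    S.H * (S.f ^ n * S.F ^ i) = S.f ^ n * S.F ^ i * S.H - (2 * n + i) • (S.f ^ n * S.F ^ i) := by
  have hf := semiconjBy_pow_add_nsmul S.semiconjBy_f_H (Commute.ofNat_right _ 2) n
  have hF := semiconjBy_pow_add_nsmul S.semiconjBy_F_H (Commute.one_right _) i
  have h := (hf.add_right ((Commute.one_right _).smul_right i)).mul_left hF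
  rw [h.eq, eq_sub_iff_add_eq, add_assoc, add_mul]
  congr 1
  rw [nsmul_eq_mul, nsmul_eq_mul, nsmul_one, Nat.cast_add, Nat.cast_mul, Nat.cast_comm,
    Nat.cast_ofNat]

theorem H_mul_mem_degreeELT (hgH : ∀ t, Commute (g t) S.H) {y : U} (hy : y ∈ S.degreeELT K g D) :
    S.H * y ∈ S.degreeELT K g D := by
  rw [← smul_eq_mul]
  refine smul_mem_span_of_forall (Set.forall_mem_image.2 ?_) hy
  rintro ⟨n, i, t, m, c, j⟩ hD
  have hmem (m : ℕ) : S.pbwMonomial g (n, i, t, m, c, j) ∈ S.degreeELT K g D :=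
    Submodule.subset_span ⟨(n, i, t, m, c, j), hD, rfl⟩
  have h : S.H * S.pbwMonomial g (n, i, t, m, c, j) = S.pbwMonomial g (n, i, t, m + 1, c, j) -
      (2 * n + i : ℕ) • S.pbwMonomial g (n, i, t, m, c, j) := by
    simp only [pbwMonomial, ← mul_assoc]
    rw [mul_assoc S.H, H_mul_f_pow_mul_F_pow]
    simp only [sub_mul, smul_mul_assoc, mul_assoc _ S.H (g t), ← (hgH t).eq, ← mul_assoc]
    rw [mul_assoc _ S.H (S.H ^ m), ← pow_succ']
  rw [smul_eq_mul, h]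
  exact sub_mem (hmem (m + 1)) (nsmul_mem (hmem m) _)

theorem mul_mem_degreeELT_of_mem {A : Subalgebra K U}
    (hg : Submodule.span K (Set.range g) = Subalgebra.toSubmodule A)
    (hAF : ∀ a ∈ A, Commute a S.F) {a : U} (ha : a ∈ A) {y : U} (hy : y ∈ S.degreeELT K g D) :
    a * y ∈ S.degreeELT K g D := by
  rw [← smul_eq_mul]
  refine smul_mem_span_of_forall (Set.forall_mem_image.2 ?_) hy
  rintro ⟨n, i, t, m, c, j⟩ hD
  have hgt : g t ∈ A := hg.le (Submodule.subset_span ⟨t, rfl⟩)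
  have h : a * S.pbwMonomial g (n, i, t, m, c, j) =
      S.f ^ n * S.F ^ (i : ℕ) * (a * g t) * S.H ^ m * S.e ^ c * S.E ^ (j : ℕ) := by
    simp only [pbwMonomial, ← mul_assoc, ((commute_f (hAF a ha)).pow_right n).eq]
    simp only [mul_assoc (S.f ^ n) a, ((hAF a ha).pow_right (i : ℕ)).eq, ← mul_assoc]
  rw [smul_eq_mul, h]
  exact mul_mem_degreeELT (hg.ge (A.mul_mem ha hgt)) n i m hD

variable (S) in
/-- The subalgebra generated by the Borel subalgebra of `osp(1|2)` containing `F` and `H`, together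
with a subalgebra `A` of the centralizer. -/
def borel (A : Subalgebra K U) : Subalgebra K U := Algebra.adjoin K ({S.F, S.H} ∪ (A : Set U))

theorem F_mem_borel (A : Subalgebra K U) : S.F ∈ S.borel A :=
  Algebra.subset_adjoin (Or.inl (Or.inl rfl))

theorem H_mem_borel (A : Subalgebra K U) : S.H ∈ S.borel A :=
  Algebra.subset_adjoin (Or.inl (Or.inr rfl))

theorem f_mem_borel (A : Subalgebra K U) : S.f ∈ S.borel A :=
  neg_mem (mul_mem (F_mem_borel A) (F_mem_borel A))

theorem mem_borel_of_mem {A : Subalgebra K U} {a : U} (ha : a ∈ A) : a ∈ S.borel A :=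
  Algebra.subset_adjoin (Or.inr ha)

theorem mul_mem_degreeELT_of_mem_borel {A : Subalgebra K U}
    (hg : Submodule.span K (Set.range g) = Subalgebra.toSubmodule A)
    (hAE : ∀ a ∈ A, Commute a S.E) (hAF : ∀ a ∈ A, Commute a S.F) {u : U}
    (hu : u ∈ S.borel A) {y : U} (hy : y ∈ S.degreeELT K g D) :
    u * y ∈ S.degreeELT K g D := by
  rw [← smul_eq_mul]
  refine smul_mem_of_mem_adjoin ?_ hu hy
  rintro _ ((rfl | rfl) | ha) y hy
  · exact F_mul_mem_degreeELT hy
  · have hgA (t : τ) : g t ∈ A := hg.le (Submodule.subset_span ⟨t, rfl⟩)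
    exact H_mul_mem_degreeELT (fun t => commute_H (hAE _ (hgA t)) (hAF _ (hgA t))) hy
  · exact mul_mem_degreeELT_of_mem hg hAF ha hy

theorem commute_casimir_of_mem_borel {A : Subalgebra K U} (hAE : ∀ a ∈ A, Commute a S.E)
    (hAF : ∀ a ∈ A, Commute a S.F) {u : U}
    (hu : u ∈ S.borel A) : Commute (S.casimir K) u := by
  refine Algebra.commute_of_mem_adjoin_of_forall_mem_commute hu ?_
  rintro a ((rfl | rfl) | ha)
  · exact (S.commute_F_casimir K).symm
  · exact commute_H (S.commute_E_casimir K).symm (S.commute_F_casimir K).symm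
  · exact (commute_casimir (hAE a ha) (hAF a ha)).symm

theorem E_pow_mem_degreeELT (hg : (1 : U) ∈ Submodule.span K (Set.range g)) {d : ℕ} (hd : d < D) :
    S.E ^ d ∈ S.degreeELT K g D := by
  have h := mul_mem_degreeELT (S := S) hg 0 0 0 (c := d / 2) (j := Fin.ofNat 2 d)
    (Nat.div_add_mod d 2 ▸ hd)
  have hE : S.e ^ (d / 2) * S.E ^ (d % 2) = S.E ^ d := by
    rw [e, ← pow_two, ← pow_mul, ← pow_add, Nat.div_add_mod]
  simpa [hE] using h

end PBW

section LeadingTerm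

variable {K U τ : Type*} [Field K] [Ring U] [Algebra K U] {S : Osp12Pair U}
  {g : τ → U} {D : ℕ} {A : Subalgebra K U}

theorem casimir_pow_succ_mul_sub (x : U) (c j : ℕ) :
    S.casimir K ^ (c + 1) * x -
        (2 : K) ^ (c + 1) • (S.f ^ (c + 1 + j) * S.E ^ (2 * (c + 1) + j)) =
      S.casimir K * (S.casimir K ^ c * x - (2 : K) ^ c • (S.f ^ (c + j) * S.E ^ (2 * c + j))) +
        (2 : K) ^ c • (S.f ^ (c + j) *
          (S.casimir K * S.E ^ (2 * c + j) - (2 : K) • (S.f * S.E ^ (2 * c + j + 2)))) := by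
  have hZ : S.casimir K * (S.f ^ (c + j) * S.E ^ (2 * c + j)) =
      S.f ^ (c + j) * (S.casimir K * S.E ^ (2 * c + j)) := by
    rw [← mul_assoc, (commute_casimir_f.pow_right _).eq, mul_assoc]
  have hfE : S.f ^ (c + 1 + j) * S.E ^ (2 * (c + 1) + j) =
      S.f ^ (c + j) * (S.f * S.E ^ (2 * c + j + 2)) := by
    rw [← mul_assoc, ← pow_succ, add_right_comm c, mul_add_one, add_right_comm (2 * c)]
  rw [mul_sub, mul_sub, mul_smul_comm, mul_smul_comm, hZ, hfE, pow_succ', mul_assoc]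
  module

variable [CharZero K]

theorem casimir_mul_E_pow (d : ℕ) : S.casimir K * S.E ^ d = (2 : K) • (S.f * S.E ^ (d + 2)) +
    ((1 / 2 : K) • (S.H * S.H) + (1 / 2 : K) • S.H) * S.E ^ d + S.F * S.E ^ (d + 1) := by
  rw [casimir_eq, e, pow_succ' _ (d + 1), pow_succ']
  simp only [add_mul, smul_mul_assoc, mul_assoc, add_assoc]

theorem casimir_mul_E_pow_sub_mem (hg : Submodule.span K (Set.range g) = Subalgebra.toSubmodule A)
    (hAE : ∀ a ∈ A, Commute a S.E) (hAF : ∀ a ∈ A, Commute a S.F) (d : ℕ) :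
    S.casimir K * S.E ^ d - (2 : K) • (S.f * S.E ^ (d + 2)) ∈ S.degreeELT K g (d + 2) := by
  have hE {k : ℕ} (hk : k < d + 2) := E_pow_mem_degreeELT (S := S) (hg.ge A.one_mem) hk
  rw [casimir_mul_E_pow, add_assoc, add_sub_cancel_left]
  exact add_mem (mul_mem_degreeELT_of_mem_borel hg hAE hAF (add_mem (Subalgebra.smul_mem _
    (mul_mem (H_mem_borel A) (H_mem_borel A)) _) (Subalgebra.smul_mem _ (H_mem_borel A) _))
    (hE (by omega)))
    (F_mul_mem_degreeELT (hE (by omega)))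

theorem casimir_mul_mem_degreeELT
    (hg : Submodule.span K (Set.range g) = Subalgebra.toSubmodule A)
    (hAE : ∀ a ∈ A, Commute a S.E) (hAF : ∀ a ∈ A, Commute a S.F) {y : U}
    (hy : y ∈ S.degreeELT K g D) : S.casimir K * y ∈ S.degreeELT K g (D + 2) := by
  rw [← smul_eq_mul]
  refine smul_mem_span_of_forall (Set.forall_mem_image.2 ?_) hy
  rintro z hz
  have hgz : g z.2.2.1 ∈ S.borel A :=
    mem_borel_of_mem (hg.le (Submodule.subset_span ⟨_, rfl⟩))
  obtain ⟨u, hu, d, hd, hzu⟩ : ∃ u ∈ S.borel A, ∃ d < D,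
      S.pbwMonomial g z = u * S.E ^ d :=
    ⟨_, mul_mem (mul_mem (mul_mem (pow_mem (f_mem_borel A) _) (pow_mem (F_mem_borel A) _)) hgz)
      (pow_mem (H_mem_borel A) _), _, hz,      S.pbwMonomial_eq_mul_E_pow g z⟩
  have hZ : S.casimir K * (u * S.E ^ d) =
      u * (S.casimir K * S.E ^ d - (2 : K) • (S.f * S.E ^ (d + 2))) +
        (2 : K) • (u * S.f * S.E ^ (d + 2)) := by
    rw [← mul_assoc, (commute_casimir_of_mem_borel hAE hAF hu).eq, mul_sub, mul_smul_comm]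
    simp only [mul_assoc, sub_add_cancel]
  rw [smul_eq_mul, hzu, hZ]
  exact add_mem (degreeELT_mono (Nat.add_le_add_right hd.le 2) (mul_mem_degreeELT_of_mem_borel
    hg hAE hAF hu (casimir_mul_E_pow_sub_mem hg hAE hAF d))) (Submodule.smul_mem _ _
    (mul_mem_degreeELT_of_mem_borel hg hAE hAF (mul_mem hu (f_mem_borel A)) (E_pow_mem_degreeELT
    (hg.ge A.one_mem) (Nat.add_lt_add_right hd 2))))

theorem thetaE_sub_mem_degreeELT (hg : Submodule.span K (Set.range g) = Subalgebra.toSubmodule A)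
    (hAE : ∀ a ∈ A, Commute a S.E) (hAF : ∀ a ∈ A, Commute a S.F) :
    S.thetaE K - S.f * S.E ∈ S.degreeELT K g 1 := by
  have h : S.thetaE K - S.f * S.E = S.F * (((1 / 2 : K) • S.H + (1 / 4 : K) • 1) * S.E ^ 0) := by
    rw [thetaE_eq, pow_zero, mul_one, mul_add, mul_smul_comm, mul_smul_comm, mul_one, add_assoc,
      add_sub_cancel_left]
  rw [h]
  exact F_mul_mem_degreeELT (mul_mem_degreeELT_of_mem_borel hg hAE hAF (add_mem
    (Subalgebra.smul_mem _ (H_mem_borel A) _) (Subalgebra.smul_mem _ (one_mem _) _))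
    (E_pow_mem_degreeELT (hg.ge A.one_mem) zero_lt_one))

theorem casimir_pow_mul_thetaE_pow_sub_mem
    (hg : Submodule.span K (Set.range g) = Subalgebra.toSubmodule A)
    (hAE : ∀ a ∈ A, Commute a S.E) (hAF : ∀ a ∈ A, Commute a S.F) (c : ℕ) (j : Fin 2) :
    S.casimir K ^ c * S.thetaE K ^ (j : ℕ) -
      (2 : K) ^ c • (S.f ^ (c + j) * S.E ^ (2 * c + j)) ∈ S.degreeELT K g (2 * c + j) := by
  induction c with
  | zero =>
    fin_cases j
    · simp
    · simpa using thetaE_sub_mem_degreeELT hg hAE hAF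
  | succ c ih =>
    rw [casimir_pow_succ_mul_sub, mul_add_one, add_right_comm]
    exact add_mem (casimir_mul_mem_degreeELT hg hAE hAF ih) (Submodule.smul_mem _ _
      (mul_mem_degreeELT_of_mem_borel hg hAE hAF (pow_mem (f_mem_borel A) _)
      (casimir_mul_E_pow_sub_mem hg hAE hAF _)))

theorem invariantMonomial_sub_mem_degreeELT
    (hg : Submodule.span K (Set.range g) = Subalgebra.toSubmodule A)
    (hAE : ∀ a ∈ A, Commute a S.E) (hAF : ∀ a ∈ A, Commute a S.F)
    (z : Fin 2 × τ × ℕ × Fin 2) :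
    S.invariantMonomial K g z - (2 : K) ^ z.2.2.1 •
        S.pbwMonomial g (z.2.2.1 + z.2.2.2, z.1, z.2.1, 0, z.2.2.1, z.2.2.2) ∈
      S.degreeELT K g (2 * z.2.2.1 + z.2.2.2) := by
  obtain ⟨i, t, c, j⟩ := z
  have hgt : g t ∈ A := hg.le (Submodule.subset_span ⟨t, rfl⟩)
  have hf : Commute (S.F ^ (i : ℕ) * g t) (S.f ^ (c + j)) :=
    ((S.commute_F_f.pow_left _).mul_left (commute_f (hAF _ hgt))).pow_right _
  have h := mul_mem_degreeELT_of_mem_borel hg hAE hAF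
    (mul_mem (pow_mem (F_mem_borel A) i) (mem_borel_of_mem hgt))
    (casimir_pow_mul_thetaE_pow_sub_mem hg hAE hAF c j)
  rwa [mul_sub, mul_smul_comm, ← mul_assoc, ← mul_assoc, hf.eq, ← mul_assoc,
    ← mul_one (S.f ^ (c + j) * S.F ^ (i : ℕ) * g t), ← pow_zero S.H, ← S.pbwMonomial_eq_mul_E_pow g
    (c + j, i, t, 0, c, j)] at h

end LeadingTerm

section Independence

variable {K U τ : Type*} [Field K] [Ring U] [Algebra K U] {S : Osp12Pair U} {g : τ → U}
  {A : Subalgebra K U} {b : Module.Basis (ℕ × Fin 2 × τ × ℕ × ℕ × Fin 2) K U}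

theorem f_mul_pbwBasis (hb : ∀ z, b z = S.pbwMonomial g z) (n : ℕ)
    (i : Fin 2 × τ × ℕ × ℕ × Fin 2) : LinearMap.mulLeft K S.f (b (n, i)) = b (n + 1, i) := by
  simp only [hb, pbwMonomial, LinearMap.mulLeft_apply, pow_succ', mul_assoc]

theorem isLeftRegular_f_sub_one (hb : ∀ z, b z = S.pbwMonomial g z) :
    IsLeftRegular (S.f - 1) := by
  refine isLeftRegular_iff_right_eq_zero_of_mul.2 fun v hv => ?_
  rw [sub_mul, one_mul, sub_eq_zero] at hv
  exact eq_zero_of_shift_eq_self (f_mul_pbwBasis hb) hv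

theorem adjoin_eq_top_of_pbwBasis
    (hg : Submodule.span K (Set.range g) = Subalgebra.toSubmodule A)
    (hb : ∀ z, b z = S.pbwMonomial g z) : Algebra.adjoin K ({S.E, S.F} ∪ (A : Set U)) = ⊤ := by
  refine Algebra.toSubmodule_eq_top.1 (eq_top_iff.2 (b.span_eq.ge.trans (Submodule.span_le.2 ?_)))
  rintro _ ⟨z, rfl⟩
  have hE : S.E ∈ Algebra.adjoin K ({S.E, S.F} ∪ (A : Set U)) :=
    Algebra.subset_adjoin (Or.inl (Or.inl rfl))
  have hF : S.F ∈ Algebra.adjoin K ({S.E, S.F} ∪ (A : Set U)) :=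
    Algebra.subset_adjoin (Or.inl (Or.inr rfl))
  have hgz : g z.2.2.1 ∈ Algebra.adjoin K ({S.E, S.F} ∪ (A : Set U)) :=
    Algebra.subset_adjoin (Or.inr (hg.le (Submodule.subset_span ⟨_, rfl⟩)))
  have hH : S.H ∈ Algebra.adjoin K ({S.E, S.F} ∪ (A : Set U)) :=
    add_mem (mul_mem hE hF) (mul_mem hF hE)
  rw [SetLike.mem_coe, Subalgebra.mem_toSubmodule, hb]
  exact mul_mem (mul_mem (mul_mem (mul_mem (mul_mem (pow_mem (neg_mem (mul_mem hF hF)) _)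
    (pow_mem hF _)) hgz) (pow_mem hH _)) (pow_mem (mul_mem hE hE) _)) (pow_mem hE _)

attribute [local instance] LieRing.ofAssociativeRing in
theorem adNilpotentSubalgebra_f_sub_one_eq_top
    (hA : Algebra.adjoin K ({S.E, S.F} ∪ (A : Set U)) = ⊤) (hAF : ∀ a ∈ A, Commute a S.F) :
    adNilpotentSubalgebra K (S.f - 1) = ⊤ := by
  have hcomm {x : U} (hx : Commute x S.f) : LieAlgebra.ad K U (S.f - 1) x = 0 := by
    rw [LieAlgebra.ad_apply, Ring.lie_def, sub_eq_zero]
    exact (hx.sub_right (Commute.one_right x)).eq.symm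
  have hE : LieAlgebra.ad K U (S.f - 1) S.E = -S.F := by
    rw [LieAlgebra.ad_apply, Ring.lie_def, mul_sub, E_mul_f]
    noncomm_ring
  rw [← top_le_iff, ← hA, Algebra.adjoin_le_iff]
  rintro _ ((rfl | rfl) | ha)
  · exact ⟨2, by rw [pow_two, Module.End.mul_apply, hE, map_neg, hcomm S.commute_F_f, neg_zero]⟩
  · exact ⟨1, hcomm S.commute_F_f⟩
  · exact ⟨1, hcomm (commute_f (hAF _ ha))⟩

theorem isRightRegular_f_sub_one
    (hg : Submodule.span K (Set.range g) = Subalgebra.toSubmodule A)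
    (hAF : ∀ a ∈ A, Commute a S.F) (hb : ∀ z, b z = S.pbwMonomial g z) :
    IsRightRegular (S.f - 1) :=
  isRightRegular_of_isLeftRegular_of_adNilpotent K (isLeftRegular_f_sub_one hb)
    (adNilpotentSubalgebra_f_sub_one_eq_top (adjoin_eq_top_of_pbwBasis hg hb) hAF)

theorem columnSum_eq_zero_of_commute_f
    (hg : Submodule.span K (Set.range g) = Subalgebra.toSubmodule A)
    (hAF : ∀ a ∈ A, Commute a S.F) (hb : ∀ z, b z = S.pbwMonomial g z) {x : U}
    (hx : Commute x S.f) (hxI : x ∈ S.whittakerIdeal) (z : Fin 2 × τ × ℕ × ℕ × Fin 2) :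
    columnSum b z x = 0 := by
  obtain ⟨u, rfl⟩ := Submodule.mem_span_singleton.1 hxI
  have hu : Commute u (S.f - 1) := commute_of_commute_mul_right
    (isRightRegular_f_sub_one hg hAF hb) (hx.sub_right (Commute.one_right _))
  rw [smul_eq_mul, hu.eq, sub_mul, one_mul, map_sub, sub_eq_zero]
  exact columnSum_shift (f_mul_pbwBasis hb) z u

theorem columnSum_eq_zero_of_mem_degreeELT (hb : ∀ z, b z = S.pbwMonomial g z)
    {z : Fin 2 × τ × ℕ × ℕ × Fin 2} {D : ℕ} (hD : D ≤ 2 * z.2.2.2.1 + z.2.2.2.2) {y : U}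
    (hy : y ∈ S.degreeELT K g D) : columnSum b z y = 0 := by
  classical
  suffices h : S.degreeELT K g D ≤ (columnSum b z).ker from h hy
  refine Submodule.span_le.2 ?_
  rintro _ ⟨p, hp, rfl⟩
  rw [SetLike.mem_coe, LinearMap.mem_ker, ← hb, columnSum_apply, if_neg]
  rintro rfl
  exact absurd hp hD.not_gt

theorem columnSum_invariantMonomial [CharZero K] [DecidableEq τ]
    (hg : Submodule.span K (Set.range g) = Subalgebra.toSubmodule A)
    (hAE : ∀ a ∈ A, Commute a S.E) (hAF : ∀ a ∈ A, Commute a S.F)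
    (hb : ∀ z, b z = S.pbwMonomial g z) {z z' : Fin 2 × τ × ℕ × Fin 2}
    (hdeg : 2 * z.2.2.1 + (z.2.2.2 : ℕ) ≤ 2 * z'.2.2.1 + z'.2.2.2) :
    columnSum b (z'.1, z'.2.1, 0, z'.2.2) (S.invariantMonomial K g z) =
      if z = z' then 2 ^ z.2.2.1 else 0 := by
  have h := columnSum_eq_zero_of_mem_degreeELT hb (z := (z'.1, z'.2.1, 0, z'.2.2)) hdeg
    (invariantMonomial_sub_mem_degreeELT hg hAE hAF z)
  rw [map_sub, sub_eq_zero] at h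
  rw [h, ← hb, map_smul, columnSum_apply, smul_eq_mul, mul_ite, mul_one, mul_zero]
  simp only [Prod.ext_iff, true_and]

theorem linearIndependent_invariantMonomial_smul [CharZero K]
    {V : Type*} [AddCommGroup V] [Module K V] [Module U V] [IsScalarTower K U V] {v : V}
    (hg : Submodule.span K (Set.range g) = Subalgebra.toSubmodule A)
    (hAE : ∀ a ∈ A, Commute a S.E) (hAF : ∀ a ∈ A, Commute a S.F)
    (hb : ∀ z, b z = S.pbwMonomial g z)
    (hann : ∀ u : U, u • v = 0 → u ∈ S.whittakerIdeal) :
    LinearIndependent K fun z => S.invariantMonomial K g z • v := by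
  classical
  refine linearIndependent_comp_of_triangular
    ((LinearMap.toSpanSingleton U V v).restrictScalars K) (S.invariantMonomial K g)
    (fun z => columnSum b (z.1, z.2.1, 0, z.2.2)) (fun z => 2 * z.2.2.1 + z.2.2.2)
    (fun z => ?_) (fun z z' hdeg hne => ?_) fun x hx hxv z => ?_
  · rw [columnSum_invariantMonomial hg hAE hAF hb le_rfl, if_pos rfl]
    exact pow_ne_zero _ two_ne_zero
  · rw [columnSum_invariantMonomial hg hAE hAF hb hdeg, if_neg hne]
  · have hxf : Commute x S.f := by
      have hle : Submodule.span K (Set.range (S.invariantMonomial K g)) ≤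
          Subalgebra.toSubmodule (Subalgebra.centralizer K {S.f}) := by
        refine Submodule.span_le.2 (Set.range_subset_iff.2 fun z => ?_)
        rintro _ rfl
        exact (commute_invariantMonomial_f
          (fun t => hAF _ (hg.le (Submodule.subset_span ⟨t, rfl⟩))) z).eq.symm
      exact (hle hx S.f rfl).symm
    exact columnSum_eq_zero_of_commute_f hg hAF hb hxf (hann x hxv) _

end Independence

end Osp12Pair

section CommutingFamily

variable {K : Type*} {U : Type} [CommRing K] [Ring U] [Algebra K U] {n : ℕ} {h : Fin n → U}

theorem commute_of_mem_adjoin_range {b : U} (hb : ∀ i, Commute (h i) b) :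
    ∀ a ∈ Algebra.adjoin K (Set.range h), Commute a b := fun _ ha =>
  (Algebra.commute_of_mem_adjoin_of_forall_mem_commute ha
    (Set.forall_mem_range.2 fun i => (hb i).symm)).symm

theorem ringProd_eq_noncommProd {x : Fin n → U}
    (hx : Set.Pairwise (Finset.univ : Finset (Fin n)) (Function.onFun Commute x)) :
    ringProd x = Finset.univ.noncommProd x hx := by
  simp only [ringProd, List.ofFn_eq_map]
  exact (Multiset.noncommProd_coe _ _).symm

theorem mul_ringProd_pow (hh : ∀ i j, Commute (h i) (h j)) (i : Fin n) (t : Fin n → ℕ) :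
    h i * ringProd (fun j => h j ^ t j) =
      ringProd fun j => h j ^ (Pi.single i 1 + t : Fin n → ℕ) j := by
  have hpow (t : Fin n → ℕ) : Set.Pairwise (Finset.univ : Finset (Fin n))
      (Function.onFun Commute fun j => h j ^ t j) := fun j _ k _ _ => (hh j k).pow_pow _ _
  rw [ringProd_eq_noncommProd (hpow t), ringProd_eq_noncommProd (hpow _),
    ← Finset.mul_noncommProd_erase _ (Finset.mem_univ i),
    ← Finset.mul_noncommProd_erase _ (Finset.mem_univ i), ← mul_assoc, ← pow_succ', Pi.add_apply,
    Pi.single_eq_same, add_comm 1]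
  congr 1
  refine Finset.noncommProd_congr rfl (fun j hj => ?_) _
  rw [Pi.add_apply, Pi.single_eq_of_ne (Finset.ne_of_mem_erase hj), zero_add]

theorem span_ringProd_pow (hh : ∀ i j, Commute (h i) (h j)) :
    Submodule.span K (Set.range fun t : Fin n → ℕ => ringProd fun i => h i ^ t i) =
      Subalgebra.toSubmodule (Algebra.adjoin K (Set.range h)) := by
  refine le_antisymm (Submodule.span_le.2 (Set.range_subset_iff.2 fun t => ?_)) fun u hu => ?_
  · refine Subalgebra.list_prod_mem _ fun x hx => ?_
    obtain ⟨i, rfl⟩ := List.mem_ofFn.1 hx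
    exact (Algebra.adjoin K _).pow_mem (Algebra.subset_adjoin (Set.mem_range_self i)) _
  · suffices hu1 : u • (1 : U) ∈ Submodule.span K
        (Set.range fun t : Fin n → ℕ => ringProd fun i => h i ^ t i) by
      rwa [smul_eq_mul, mul_one] at hu1
    have h1 : (1 : U) ∈ Submodule.span K
        (Set.range fun t : Fin n → ℕ => ringProd fun i => h i ^ t i) :=
      Submodule.subset_span ⟨0, by simp [ringProd]⟩
    refine smul_mem_of_mem_adjoin (Set.forall_mem_range.2 fun i x => ?_) hu h1
    refine smul_mem_span_of_forall (Set.forall_mem_range.2 fun t => ?_)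
    exact Submodule.subset_span ⟨Pi.single i 1 + t, (mul_ringProd_pow hh i t).symm⟩

end CommutingFamily

namespace Osp12Pair

section Representatives

variable (K : Type*) {U : Type*} [Field K] [Ring U] [Algebra K U] (S : Osp12Pair U)

/-- The representative of `C′_θ` in the universal Whittaker module. -/
def casimirRep : U :=
  (2 : K) • S.e + (1 / 2 : K) • (S.H * S.H) - (3 / 2 : K) • S.H + S.F * S.E

/-- The representative of `Θ′_E` in the universal Whittaker module. -/
def thetaERep : U := S.E + (1 / 2 : K) • (S.F * S.H) - (3 / 4 : K) • S.F

/-- The representatives of the basis monomials `Θ′_F^i · g · C′_θ^c · Θ′_E^j` of the finite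
`W`-superalgebra, with `g` in a family of elements commuting with `osp(1|2)`. -/
def monomialRep {τ : Type*} (g : τ → U) (z : Fin 2 × τ × ℕ × Fin 2) : U :=
  S.F ^ (z.1 : ℕ) * g z.2.1 * S.casimirRep K ^ z.2.2.1 * S.thetaERep K ^ (z.2.2.2 : ℕ)

variable {K S} {u : U}

theorem commute_casimirRep (hE : Commute u S.E) (hF : Commute u S.F) :
    Commute u (S.casimirRep K) := by
  have hH := commute_H hE hF
  exact ((((hE.mul_right hE).smul_right _).add_right ((hH.mul_right hH).smul_right _)).sub_right
    (hH.smul_right _)).add_right (hF.mul_right hE)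

theorem commute_thetaERep (hE : Commute u S.E) (hF : Commute u S.F) : Commute u (S.thetaERep K) :=
  (hE.add_right ((hF.mul_right (commute_H hE hF)).smul_right _)).sub_right (hF.smul_right _)

variable {V : Type*} [AddCommGroup V] [Module K V] [Module U V] [IsScalarTower K U V] {x : V}

theorem casimir_smul_mem_whittaker (hx : x ∈ S.whittaker K V) :
    S.casimir K • x ∈ S.whittaker K V := S.smul_mem_whittaker commute_casimir_f hx

theorem thetaE_smul_mem_whittaker (hx : x ∈ S.whittaker K V) :
    S.thetaE K • x ∈ S.whittaker K V := S.smul_mem_whittaker (S.commute_thetaE_f K) hx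

theorem F_smul_mem_whittaker (hx : x ∈ S.whittaker K V) : S.F • x ∈ S.whittaker K V :=
  S.smul_mem_whittaker S.commute_F_f hx

theorem F_mul_self_smul (hx : x ∈ S.whittaker K V) :
    (S.F * S.F + S.F * S.F) • x = ((-2 : K) • (1 : U)) • x := by
  have h : S.F * S.F + S.F * S.F = (-2 : K) • S.f := by
    rw [f]
    module
  rw [h, smul_assoc, S.mem_whittaker.1 hx, smul_assoc, one_smul]

variable [CharZero K]

theorem casimirRep_smul (hx : x ∈ S.whittaker K V) : S.casimirRep K • x = S.casimir K • x := by
  rw [casimirRep, ← casimir_sub_e_mul, S.sub_mul_f_sub_one_smul _ _ hx]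

theorem thetaERep_smul (hx : x ∈ S.whittaker K V) : S.thetaERep K • x = S.thetaE K • x := by
  rw [thetaERep, ← thetaE_sub_E_mul, S.sub_mul_f_sub_one_smul _ _ hx]

theorem casimirRep_pow_smul (hx : x ∈ S.whittaker K V) (c : ℕ) :
    S.casimirRep K ^ c • x = S.casimir K ^ c • x := by
  induction c with
  | zero => rw [pow_zero, pow_zero]
  | succ c ih => rw [pow_succ', pow_succ', mul_smul, mul_smul, ih,
      casimirRep_smul (S.smul_mem_whittaker (commute_casimir_f.pow_left c) hx)]

theorem monomialRep_smul {τ : Type*} (g : τ → U) (hx : x ∈ S.whittaker K V)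
    (z : Fin 2 × τ × ℕ × Fin 2) : S.monomialRep K g z • x = S.invariantMonomial K g z • x := by
  obtain ⟨i, t, c, j⟩ := z
  have hθ : S.thetaERep K ^ (j : ℕ) • x = S.thetaE K ^ (j : ℕ) • x := by
    fin_cases j
    · simp
    · simpa using thetaERep_smul hx
  rw [monomialRep, invariantMonomial, mul_smul, hθ, mul_smul, casimirRep_pow_smul
    (S.smul_mem_whittaker ((S.commute_thetaE_f K).pow_left j) hx), ← mul_smul, ← mul_smul]

theorem thetaERep_mul_self_smul (hx : x ∈ S.whittaker K V) :
    (S.thetaERep K * S.thetaERep K + S.thetaERep K * S.thetaERep K) • x =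
      (S.casimirRep K + (1 / 8 : K) • 1) • x := by
  have hf : Commute S.f ((1 / 2 : K) • S.casimir K + (1 / 16 : K) • 1) :=
    (commute_casimir_f.symm.smul_right _).add_right ((Commute.one_right _).smul_right _)
  rw [add_smul, mul_smul, thetaERep_smul hx, thetaERep_smul (thetaE_smul_mem_whittaker hx),
    ← mul_smul, thetaE_mul_self, hf.eq, mul_smul, S.mem_whittaker.1 hx, add_smul, add_smul,
    casimirRep_smul hx, smul_assoc, smul_assoc, smul_assoc, one_smul]
  generalize S.casimir K • x = y
  module

theorem casimirRep_mul_thetaERep_smul (hx : x ∈ S.whittaker K V) :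
    (S.casimirRep K * S.thetaERep K - S.thetaERep K * S.casimirRep K) • x = 0 := by
  rw [sub_smul, mul_smul, mul_smul, thetaERep_smul hx, casimirRep_smul hx,
    casimirRep_smul (thetaE_smul_mem_whittaker hx), thetaERep_smul (casimir_smul_mem_whittaker hx),
    ← mul_smul, ← mul_smul, ← sub_smul, commute_casimir_thetaE.eq, sub_self, zero_smul]

theorem casimirRep_mul_F_smul (hx : x ∈ S.whittaker K V) :
    (S.casimirRep K * S.F - S.F * S.casimirRep K) • x = 0 := by
  rw [sub_smul, mul_smul, mul_smul, casimirRep_smul hx, casimirRep_smul (F_smul_mem_whittaker hx),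
    ← mul_smul, ← mul_smul, ← sub_smul, (S.commute_F_casimir K).eq, sub_self, zero_smul]

theorem thetaERep_mul_F_smul (hx : x ∈ S.whittaker K V) :
    (S.thetaERep K * S.F + S.F * S.thetaERep K) • x = 0 := by
  rw [add_smul, mul_smul, mul_smul, thetaERep_smul hx, thetaERep_smul (F_smul_mem_whittaker hx),
    ← mul_smul, ← mul_smul, ← add_smul, thetaE_mul_F, neg_add_cancel, zero_smul]

end Representatives

section WhittakerModule

variable {U : Type*} [Ring U] {S : Osp12Pair U}

theorem mk_eq_smul_mk_one (y : U) :
    (Submodule.Quotient.mk y : U ⧸ S.whittakerIdeal) = y • Submodule.Quotient.mk 1 := by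
  rw [← Submodule.Quotient.mk_smul, smul_eq_mul, mul_one]

theorem mem_whittakerIdeal_of_smul_mk_one_eq_zero {u : U}
    (hu : u • (Submodule.Quotient.mk 1 : U ⧸ S.whittakerIdeal) = 0) : u ∈ S.whittakerIdeal :=
  (Submodule.Quotient.mk_eq_zero _).1 ((mk_eq_smul_mk_one u).trans hu)

variable (K : Type*) [Field K] [Algebra K U]

theorem mk_mem_whittaker_iff {y : U} :
    (Submodule.Quotient.mk y : U ⧸ S.whittakerIdeal) ∈ S.whittaker K (U ⧸ S.whittakerIdeal) ↔
      S.f * y - y * S.f ∈ S.whittakerIdeal := by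
  have hy : y * (S.f - 1) ∈ S.whittakerIdeal :=
    Submodule.smul_mem _ y (Submodule.mem_span_singleton_self _)
  have h : S.f * y - y * S.f = (S.f * y - y) - y * (S.f - 1) := by rw [mul_sub, mul_one]; abel
  rw [h, Submodule.sub_mem_iff_left _ hy, mem_whittaker, ← Submodule.Quotient.mk_smul,
    Submodule.Quotient.eq, smul_eq_mul]

theorem mk_one_mem_whittaker :
    (Submodule.Quotient.mk 1 : U ⧸ S.whittakerIdeal) ∈ S.whittaker K (U ⧸ S.whittakerIdeal) := by
  rw [mk_mem_whittaker_iff, mul_one, one_mul, sub_self]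
  exact zero_mem _

theorem setOf_commutator_mem_eq_whittaker :
    {q : U ⧸ S.whittakerIdeal | ∃ y : U, Submodule.Quotient.mk y = q ∧
      S.f * y - y * S.f ∈ S.whittakerIdeal} = S.whittaker K (U ⧸ S.whittakerIdeal) := by
  ext q
  constructor
  · rintro ⟨y, rfl, hy⟩
    exact (mk_mem_whittaker_iff K).2 hy
  · intro hq
    obtain ⟨y, rfl⟩ := Submodule.Quotient.mk_surjective _ q
    exact ⟨y, rfl, (mk_mem_whittaker_iff K).1 hq⟩

end WhittakerModule

theorem exists_E_F_eq {U : Type*} [Ring U] {E F H : U} (hEF : E * F + F * E = H)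
    (hE : H * E - E * H = E) (hF : H * F - F * H = -F) :
    ∃ S : Osp12Pair U, S.E = E ∧ S.F = F := by
  subst hEF
  refine ⟨⟨E, F, ?_, ?_⟩, rfl, rfl⟩
  · linear_combination (norm := noncomm_ring) hE
  · linear_combination (norm := noncomm_ring) hF

section Relations

variable {K : Type*} {U : Type*} [Field K] [Ring U] [Algebra K U] (S : Osp12Pair U)

theorem e_eq_of_two_smul_eq [CharZero K] {e : U} (h : S.E * S.E + S.E * S.E = (2 : K) • e) :
    S.e = e :=
  smul_right_injective U (two_ne_zero (α := K)) ((two_smul K S.e).trans h)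

theorem f_eq_of_neg_two_smul_eq [CharZero K] {f : U}
    (h : S.F * S.F + S.F * S.F = (-2 : K) • f) : S.f = f := by
  refine smul_right_injective U (neg_ne_zero.2 (two_ne_zero (α := K))) (Eq.trans ?_ h)
  change (-2 : K) • -(S.F * S.F) = _
  rw [neg_smul_neg, two_smul]

variable {S} {a b y : U}

theorem mk_eq_mk_of_smul_eq (h : ∀ x ∈ S.whittaker K (U ⧸ S.whittakerIdeal), a • x = b • x) :
    (Submodule.Quotient.mk a : U ⧸ S.whittakerIdeal) = Submodule.Quotient.mk b := by
  rw [mk_eq_smul_mk_one a, mk_eq_smul_mk_one b, h _ (mk_one_mem_whittaker K)]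

theorem mk_eq_zero_of_smul_eq (h : ∀ x ∈ S.whittaker K (U ⧸ S.whittakerIdeal), a • x = 0) :
    (Submodule.Quotient.mk a : U ⧸ S.whittakerIdeal) = 0 := by
  rw [mk_eq_smul_mk_one, h _ (mk_one_mem_whittaker K)]

theorem commutator_mem_of_smul_mem (h : ∀ x ∈ S.whittaker K (U ⧸ S.whittakerIdeal),
    y • x ∈ S.whittaker K (U ⧸ S.whittakerIdeal)) : S.f * y - y * S.f ∈ S.whittakerIdeal := by
  rw [← mk_mem_whittaker_iff K, mk_eq_smul_mk_one]
  exact h _ (mk_one_mem_whittaker K)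

theorem mk_commutator_eq_zero (hab : Commute a b) :
    (Submodule.Quotient.mk (a * b - b * a) : U ⧸ S.whittakerIdeal) = 0 := by
  rw [hab.eq, sub_self, Submodule.Quotient.mk_zero]

variable (S)

theorem commutator_F_mem : S.f * S.F - S.F * S.f ∈ S.whittakerIdeal := by
  rw [S.commute_F_f.eq, sub_self]
  exact zero_mem _

variable [CharZero K]

theorem commutator_thetaERep_mem :
    S.f * S.thetaERep K - S.thetaERep K * S.f ∈ S.whittakerIdeal :=
  commutator_mem_of_smul_mem (K := K) fun _ hx =>
    (thetaERep_smul hx).symm ▸ thetaE_smul_mem_whittaker hx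

theorem commutator_casimirRep_mem :
    S.f * S.casimirRep K - S.casimirRep K * S.f ∈ S.whittakerIdeal :=
  commutator_mem_of_smul_mem (K := K) fun _ hx =>
    (casimirRep_smul hx).symm ▸ casimir_smul_mem_whittaker hx

end Relations

section Basis

variable {K U τ : Type*} [Field K] [CharZero K] [Ring U] [Algebra K U] {S : Osp12Pair U}
  {g : τ → U} {A : Subalgebra K U} {b : Module.Basis (ℕ × Fin 2 × τ × ℕ × ℕ × Fin 2) K U}

theorem linearIndependent_mk_monomialRep
    (hg : Submodule.span K (Set.range g) = Subalgebra.toSubmodule A)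
    (hAE : ∀ a ∈ A, Commute a S.E) (hAF : ∀ a ∈ A, Commute a S.F)
    (hb : ∀ z, b z = S.pbwMonomial g z) :
    LinearIndependent K fun z =>
      (Submodule.Quotient.mk (S.monomialRep K g z) : U ⧸ S.whittakerIdeal) := by
  simp only [mk_eq_smul_mk_one (S.monomialRep K g _), monomialRep_smul g (mk_one_mem_whittaker K)]
  exact linearIndependent_invariantMonomial_smul hg hAE hAF hb
    fun u hu => mem_whittakerIdeal_of_smul_mk_one_eq_zero hu

theorem whittaker_eq_span_mk_monomialRep
    (hg : Submodule.span K (Set.range g) = Subalgebra.toSubmodule A)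
    (hAE : ∀ a ∈ A, Commute a S.E) (hAF : ∀ a ∈ A, Commute a S.F)
    (hb : ∀ z, b z = S.pbwMonomial g z) :
    S.whittaker K (U ⧸ S.whittakerIdeal) =
      Submodule.span K (Set.range fun z => Submodule.Quotient.mk (S.monomialRep K g z)) := by
  simp only [mk_eq_smul_mk_one (S.monomialRep K g _), monomialRep_smul g (mk_one_mem_whittaker K)]
  exact whittaker_eq_invariantSpan (adjoin_eq_top_of_pbwBasis hg hb) hAE hAF hg
    (fun x => (Submodule.Quotient.mk_surjective _ x).imp fun u hu =>
      (mk_eq_smul_mk_one u).symm.trans hu) (mk_one_mem_whittaker K)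

end Basis

end Osp12Pair

open Osp12Pair in
theorem stmt14_presentation_of_Ug0e_general {K : Type*} [Field K] [CharZero K]
    (km : ℕ) (Ug0 : Type) [Ring Ug0] [Algebra K Ug0]
    (ιh : Fin km → Ug0) (ιe ιH ιf ιE ιF : Ug0)
    (hhE : ιH * ιE - ιE * ιH = ιE)
    (hhF : ιH * ιF - ιF * ιH = -ιF)
    (hEE : ιE * ιE + ιE * ιE = (2 : K) • ιe)
    (hEF : ιE * ιF + ιF * ιE = ιH)
    (hFF : ιF * ιF + ιF * ιF = (-2 : K) • ιf)
    (hcen : ∀ i, Commute (ιh i) ιE ∧ Commute (ιh i) ιF ∧ ∀ j, Commute (ιh i) (ιh j))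
    (hPBWindep : LinearIndependent K
      (fun z : ℕ × Fin 2 × (Fin km → ℕ) × ℕ × ℕ × Fin 2 =>
        ιf ^ z.1 * ιF ^ (z.2.1 : ℕ) * ringProd (fun i => ιh i ^ z.2.2.1 i) *
          ιH ^ z.2.2.2.1 * ιe ^ z.2.2.2.2.1 * ιE ^ (z.2.2.2.2.2 : ℕ)))
    (hPBWspan : Submodule.span K (Set.range
      (fun z : ℕ × Fin 2 × (Fin km → ℕ) × ℕ × ℕ × Fin 2 =>
        ιf ^ z.1 * ιF ^ (z.2.1 : ℕ) * ringProd (fun i => ιh i ^ z.2.2.1 i) *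
          ιH ^ z.2.2.2.1 * ιe ^ z.2.2.2.2.1 * ιE ^ (z.2.2.2.2.2 : ℕ))) = ⊤)
    (I0 : Submodule Ug0 Ug0) (hI0 : I0 = Submodule.span Ug0 {ιf - 1})
    (Inv : Set (Ug0 ⧸ I0))
    (hInv : Inv = {q : Ug0 ⧸ I0 | ∃ y : Ug0,
      (Submodule.Quotient.mk y : Ug0 ⧸ I0) = q ∧ ιf * y - y * ιf ∈ I0})
    (yE yC yF : Ug0)
    (hyE : yE = ιE + (1/2 : K) • (ιF * ιH) - (3/4 : K) • ιF)
    (hyC : yC = (2 : K) • ιe + (1/2 : K) • (ιH * ιH) - (3/2 : K) • ιH + ιF * ιE)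
    (hyF : yF = ιF) :
    ((∀ i, ιf * ιh i - ιh i * ιf ∈ I0) ∧ (ιf * yE - yE * ιf ∈ I0) ∧
      (ιf * yC - yC * ιf ∈ I0) ∧ (ιf * yF - yF * ιf ∈ I0))
    ∧
    ((Submodule.Quotient.mk (yE * yE + yE * yE) : Ug0 ⧸ I0) =
        Submodule.Quotient.mk (yC + (1/8 : K) • 1) ∧
      (Submodule.Quotient.mk (yF * yF + yF * yF) : Ug0 ⧸ I0) =
        Submodule.Quotient.mk ((-2 : K) • 1) ∧
      (∀ i j, (Submodule.Quotient.mk (ιh i * ιh j - ιh j * ιh i) : Ug0 ⧸ I0) = 0) ∧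
      (∀ i, (Submodule.Quotient.mk (ιh i * yE - yE * ιh i) : Ug0 ⧸ I0) = 0) ∧
      (∀ i, (Submodule.Quotient.mk (ιh i * yC - yC * ιh i) : Ug0 ⧸ I0) = 0) ∧
      (∀ i, (Submodule.Quotient.mk (ιh i * yF - yF * ιh i) : Ug0 ⧸ I0) = 0) ∧
      ((Submodule.Quotient.mk (yC * yE - yE * yC) : Ug0 ⧸ I0) = 0) ∧
      ((Submodule.Quotient.mk (yC * yF - yF * yC) : Ug0 ⧸ I0) = 0) ∧
      ((Submodule.Quotient.mk (yE * yF + yF * yE) : Ug0 ⧸ I0) = 0))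
    ∧
    (LinearIndependent K
        (fun z : Fin 2 × (Fin km → ℕ) × ℕ × Fin 2 =>
          (Submodule.Quotient.mk
            (yF ^ (z.1 : ℕ) * ringProd (fun i => ιh i ^ z.2.1 i) *
              yC ^ z.2.2.1 * yE ^ (z.2.2.2 : ℕ)) : Ug0 ⧸ I0)) ∧
      Inv = (Submodule.span K (Set.range
        (fun z : Fin 2 × (Fin km → ℕ) × ℕ × Fin 2 =>
          (Submodule.Quotient.mk
            (yF ^ (z.1 : ℕ) * ringProd (fun i => ιh i ^ z.2.1 i) *
              yC ^ z.2.2.1 * yE ^ (z.2.2.2 : ℕ)) : Ug0 ⧸ I0))) :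
        Set (Ug0 ⧸ I0))) := by
  obtain ⟨S, rfl, rfl⟩ := exists_E_F_eq hEF hhE hhF
  obtain rfl : S.H = ιH := hEF
  obtain rfl : S.e = ιe := S.e_eq_of_two_smul_eq hEE
  obtain rfl : S.f = ιf := S.f_eq_of_neg_two_smul_eq hFF
  obtain rfl : I0 = S.whittakerIdeal := hI0
  obtain rfl : yE = S.thetaERep K := hyE
  obtain rfl : yC = S.casimirRep K := hyC
  subst hyF
  have hE i := (hcen i).1
  have hF i := (hcen i).2.1
  let g (t : Fin km → ℕ) : Ug0 := ringProd fun i => ιh i ^ t i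
  have hg := span_ringProd_pow (K := K) fun i => (hcen i).2.2
  have hAE := commute_of_mem_adjoin_range (K := K) hE
  have hAF := commute_of_mem_adjoin_range (K := K) hF
  have hb : ∀ z, Module.Basis.mk hPBWindep hPBWspan.ge z = S.pbwMonomial g z :=
    Module.Basis.mk_apply hPBWindep hPBWspan.ge
  refine ⟨⟨fun i => ?_, S.commutator_thetaERep_mem, S.commutator_casimirRep_mem,
      S.commutator_F_mem⟩,
    ⟨mk_eq_mk_of_smul_eq fun _ => thetaERep_mul_self_smul,
      mk_eq_mk_of_smul_eq fun _ => F_mul_self_smul,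
      fun i j => mk_commutator_eq_zero ((hcen i).2.2 j),
      fun i => mk_commutator_eq_zero (commute_thetaERep (hE i) (hF i)),
      fun i => mk_commutator_eq_zero (commute_casimirRep (hE i) (hF i)),
      fun i => mk_commutator_eq_zero (hF i),
      mk_eq_zero_of_smul_eq fun _ => casimirRep_mul_thetaERep_smul,
      mk_eq_zero_of_smul_eq fun _ => casimirRep_mul_F_smul,
      mk_eq_zero_of_smul_eq fun _ => thetaERep_mul_F_smul⟩,
    linearIndependent_mk_monomialRep (g := g) hg hAE hAF hb, ?_⟩
  · exact (Submodule.Quotient.mk_eq_zero _).1 (mk_commutator_eq_zero (commute_f (hF i)).symm)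
  · rw [hInv, setOf_commutator_mem_eq_whittaker K,
      whittaker_eq_span_mk_monomialRep (g := g) hg hAE hAF hb]
    rfl

theorem stmt14_presentation_of_Ug0e
    (km : ℕ)
    -- U(g₀), the enveloping superalgebra of g₀ = h^e ⊕ s_θ, s_θ ≅ osp(1|2):
    -- ιh i, ιe, ιH, ιf, ιE, ιF are the images of the basis h_1,…,h_{k−1} of
    -- h^e and of e, h, f, E = [√−2·v_{(r+1)/2}, e], F = √−2·v_{(r+1)/2}
    (Ug0 : Type) [Ring Ug0] [Algebra ℂ Ug0]
    (ιh : Fin km → Ug0) (ιe ιH ιf ιE ιF : Ug0)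
    -- the osp(1|2)-relations of Lemma `osp12genecom`
    (hhe : ιH * ιe - ιe * ιH = (2 : ℂ) • ιe)
    (hhf : ιH * ιf - ιf * ιH = (-2 : ℂ) • ιf)
    (hef : ιe * ιf - ιf * ιe = ιH)
    (hhE : ιH * ιE - ιE * ιH = ιE)
    (hhF : ιH * ιF - ιF * ιH = - ιF)
    (heE : ιe * ιE - ιE * ιe = 0)
    (heF : ιe * ιF - ιF * ιe = - ιE)
    (hfE : ιf * ιE - ιE * ιf = - ιF)
    (hfF : ιf * ιF - ιF * ιf = 0)
    (hEE : ιE * ιE + ιE * ιE = (2 : ℂ) • ιe)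
    (hEF : ιE * ιF + ιF * ιE = ιH)
    (hFF : ιF * ιF + ιF * ιF = (-2 : ℂ) • ιf)
    -- h^e is central in g₀
    (hcen : ∀ i, ιh i * ιe = ιe * ιh i ∧ ιh i * ιH = ιH * ιh i ∧
      ιh i * ιf = ιf * ιh i ∧ ιh i * ιE = ιE * ιh i ∧ ιh i * ιF = ιF * ιh i ∧
      ∀ j, ιh i * ιh j = ιh j * ιh i)
    -- the PBW theorem for U(g₀)
    (hPBWindep : LinearIndependent ℂ
      (fun z : ℕ × Fin 2 × (Fin km → ℕ) × ℕ × ℕ × Fin 2 =>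
        ιf ^ z.1 * ιF ^ (z.2.1 : ℕ) * ringProd (fun i => ιh i ^ z.2.2.1 i) *
          ιH ^ z.2.2.2.1 * ιe ^ z.2.2.2.2.1 * ιE ^ (z.2.2.2.2.2 : ℕ)))
    (hPBWspan : Submodule.span ℂ (Set.range
      (fun z : ℕ × Fin 2 × (Fin km → ℕ) × ℕ × ℕ × Fin 2 =>
        ιf ^ z.1 * ιF ^ (z.2.1 : ℕ) * ringProd (fun i => ιh i ^ z.2.2.1 i) *
          ιH ^ z.2.2.2.1 * ιe ^ z.2.2.2.2.1 * ιE ^ (z.2.2.2.2.2 : ℕ))) = ⊤)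
    -- the left ideal (I₀)_χ and the invariants U(g₀,e) ⊆ (Q₀)_χ
    (I0 : Submodule Ug0 Ug0) (hI0 : I0 = Submodule.span Ug0 {ιf - 1})
    (Inv : Set (Ug0 ⧸ I0))
    (hInv : Inv = {q : Ug0 ⧸ I0 | ∃ y : Ug0,
      (Submodule.Quotient.mk y : Ug0 ⧸ I0) = q ∧ ιf * y - y * ιf ∈ I0})
    -- representatives of the generators Θ′_{h_i}, Θ′_E, C′_θ, Θ′_F
    (yE yC yF : Ug0)
    (hyE : yE = ιE + (1/2 : ℂ) • (ιF * ιH) - (3/4 : ℂ) • ιF)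
    (hyC : yC = (2 : ℂ) • ιe + (1/2 : ℂ) • (ιH * ιH) - (3/2 : ℂ) • ιH + ιF * ιE)
    (hyF : yF = ιF) :
    -- (a) the four families of elements are ad f-invariant, i.e. define
    --     elements of U(g₀,e)
    ((∀ i, ιf * ιh i - ιh i * ιf ∈ I0) ∧ (ιf * yE - yE * ιf ∈ I0) ∧
      (ιf * yC - yC * ιf ∈ I0) ∧ (ιf * yF - yF * ιf ∈ I0))
    ∧
    -- (b) the relations: [Θ′_E,Θ′_E] = C′_θ + 1/8, [Θ′_F,Θ′_F] = −2, and all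
    --     other commutators between the generators vanish
    ((Submodule.Quotient.mk (yE * yE + yE * yE) : Ug0 ⧸ I0) =
        Submodule.Quotient.mk (yC + (1/8 : ℂ) • 1) ∧
      (Submodule.Quotient.mk (yF * yF + yF * yF) : Ug0 ⧸ I0) =
        Submodule.Quotient.mk ((-2 : ℂ) • 1) ∧
      (∀ i j, (Submodule.Quotient.mk (ιh i * ιh j - ιh j * ιh i) : Ug0 ⧸ I0) = 0) ∧
      (∀ i, (Submodule.Quotient.mk (ιh i * yE - yE * ιh i) : Ug0 ⧸ I0) = 0) ∧
      (∀ i, (Submodule.Quotient.mk (ιh i * yC - yC * ιh i) : Ug0 ⧸ I0) = 0) ∧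
      (∀ i, (Submodule.Quotient.mk (ιh i * yF - yF * ιh i) : Ug0 ⧸ I0) = 0) ∧
      ((Submodule.Quotient.mk (yC * yE - yE * yC) : Ug0 ⧸ I0) = 0) ∧
      ((Submodule.Quotient.mk (yC * yF - yF * yC) : Ug0 ⧸ I0) = 0) ∧
      ((Submodule.Quotient.mk (yE * yF + yF * yE) : Ug0 ⧸ I0) = 0))
    ∧
    -- (c) generation subject to the relations: the PBW monomials
    --     Θ′_F^{ι}·∏Θ′_{h_i}^{t_i}·C′_θ^{t_k}·Θ′_E^{ε} form a ℂ-basis of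
    --     U(g₀,e)
    (LinearIndependent ℂ
        (fun z : Fin 2 × (Fin km → ℕ) × ℕ × Fin 2 =>
          (Submodule.Quotient.mk
            (yF ^ (z.1 : ℕ) * ringProd (fun i => ιh i ^ z.2.1 i) *
              yC ^ z.2.2.1 * yE ^ (z.2.2.2 : ℕ)) : Ug0 ⧸ I0)) ∧
      Inv = (Submodule.span ℂ (Set.range
        (fun z : Fin 2 × (Fin km → ℕ) × ℕ × Fin 2 =>
          (Submodule.Quotient.mk
            (yF ^ (z.1 : ℕ) * ringProd (fun i => ιh i ^ z.2.1 i) *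
              yC ^ z.2.2.1 * yE ^ (z.2.2.2 : ℕ)) : Ug0 ⧸ I0))) :
        Set (Ug0 ⧸ I0))) :=
  stmt14_presentation_of_Ug0e_general km Ug0 ιh ιe ιH ιf ιE ιF hhE hhF hEE hEF hFF
    (fun i => ⟨(hcen i).2.2.2.1, (hcen i).2.2.2.2.1, (hcen i).2.2.2.2.2⟩) hPBWindep hPBWspan
    I0 hI0 Inv hInv yE yC yF hyE hyC hyF
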